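/- arXiv:1002.0419 — 12 statements merged into one kernel-verified Lean document; each statement's English description precedes it below -/
import Mathlib

section
/- Let Q be a commutative noetherian local ring and let f, g be regular elements in Q that are non-units. Set A = Q/(fg) and let x, y ∈ A denote the cosets of f, g modulo (fg). Then x, y is an exact pair of zero divisors in A, and this pair is regular (i.e. (x) ∩ (y) = 0 in A) if and only if (f) ∩ (g) = (fg) in Q. -/
/-!
Formalization of results from "Construction of totally reflexive modules
from an exact pair of zero divisors" by Henrik Holm.
-/

noncomputable section

/-- Non-units `x, y` in `A` form an *exact pair of zero divisors* if
`Ann_A(x) = (y)` and `Ann_A(y) = (x)`. -/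
def IsExactZeroDivisorPair {A : Type*} [CommRing A] (x y : A) : Prop :=
  ¬ IsUnit x ∧ ¬ IsUnit y ∧
    (∀ a : A, a * x = 0 ↔ a ∈ Ideal.span {y}) ∧
    (∀ a : A, a * y = 0 ↔ a ∈ Ideal.span {x})

/-- **Example (2.4).** Let `Q` be a commutative noetherian local ring and let
`f, g` be regular non-units in `Q`. In `A = Q/(fg)` the cosets `x, y` of `f, g`
form an exact pair of zero divisors, and this pair is regular (meaning
`(x) ∩ (y) = 0`) if and only if `(f) ∩ (g) = (fg)` in `Q`. -/
theorem exactZeroDivisorPair_of_quotient {Q : Type*} [CommRing Q]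
    [IsNoetherianRing Q] [IsLocalRing Q] {f g : Q}
    (hf : ¬ IsUnit f) (hg : ¬ IsUnit g)
    (hfreg : Function.Injective fun q : Q => f * q)
    (hgreg : Function.Injective fun q : Q => g * q) :
    IsExactZeroDivisorPair
        (Ideal.Quotient.mk (Ideal.span {f * g}) f)
        (Ideal.Quotient.mk (Ideal.span {f * g}) g) ∧
      ((Ideal.span {Ideal.Quotient.mk (Ideal.span {f * g}) f} ⊓
          Ideal.span {Ideal.Quotient.mk (Ideal.span {f * g}) g} = ⊥) ↔
        Ideal.span ({f} : Set Q) ⊓ Ideal.span ({g} : Set Q) =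
          Ideal.span {f * g}) := by
  have key : ∀ (d : Q), d ∣ f * g → ∀ a : Q,
      (Ideal.Quotient.mk (Ideal.span {f * g}) a ∈
        Ideal.span {Ideal.Quotient.mk (Ideal.span {f * g}) d} ↔ d ∣ a) := by
    intro d hd a
    rw [Ideal.mem_span_singleton]
    constructor
    · rintro ⟨b, hb⟩
      obtain ⟨b, rfl⟩ := Ideal.Quotient.mk_surjective b
      rw [← map_mul, Ideal.Quotient.eq, Ideal.mem_span_singleton] at hb
      exact (dvd_sub_left (dvd_mul_right d b)).mp (hd.trans hb)
    · exact fun h => map_dvd _ h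
  have zero : ∀ a : Q, Ideal.Quotient.mk (Ideal.span {f * g}) a = 0 ↔ f * g ∣ a := by
    intro a
    rw [Ideal.Quotient.eq_zero_iff_mem, Ideal.mem_span_singleton]
  have kf := key f (dvd_mul_right f g)
  have kg := key g (dvd_mul_left g f)
  refine ⟨⟨?_, ?_, ?_, ?_⟩, ?_⟩
  · intro h
    apply hf
    rw [isUnit_iff_dvd_one, ← kf, map_one, Ideal.mem_span_singleton]
    exact h.dvd
  · intro h
    apply hg
    rw [isUnit_iff_dvd_one, ← kg, map_one, Ideal.mem_span_singleton]
    exact h.dvd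
  · intro a
    obtain ⟨a, rfl⟩ := Ideal.Quotient.mk_surjective a
    rw [← map_mul, zero, kg]
    constructor
    · rintro ⟨c, hc⟩
      exact ⟨c, hfreg (by simp only; linear_combination hc)⟩
    · rintro ⟨c, rfl⟩
      exact ⟨c, by ring⟩
  · intro a
    obtain ⟨a, rfl⟩ := Ideal.Quotient.mk_surjective a
    rw [← map_mul, zero, kf]
    constructor
    · rintro ⟨c, hc⟩
      exact ⟨c, hgreg (by simp only; linear_combination hc)⟩
    · rintro ⟨c, rfl⟩
      exact ⟨c, by ring⟩
  · constructor
    · intro h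
      ext a
      rw [Ideal.mem_inf, Ideal.mem_span_singleton, Ideal.mem_span_singleton,
        Ideal.mem_span_singleton, ← zero, ← kf, ← kg, ← Ideal.mem_inf, h, Ideal.mem_bot]
    · intro h
      ext a
      obtain ⟨a, rfl⟩ := Ideal.Quotient.mk_surjective a
      rw [Ideal.mem_inf, kf, kg, Ideal.mem_bot, zero, ← Ideal.mem_span_singleton,
        ← Ideal.mem_span_singleton, ← Ideal.mem_span_singleton, ← h, Ideal.mem_inf]
end
end

section
/- Let Q be a commutative noetherian local ring, and let f, g be regular elements in Q that are non-units such that (f) ∩ (g) = (fg). Set A = Q/(fg) and let x, y ∈ A denote the cosets of f, g, which form a regular exact pair of zero divisors in A. If depth Q > 2, then there exists an element of A that is regular on the A-module A/(x, y); equivalently, the A-module A/(x, y) has positive depth. -/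
/-!
Formalization of results from "Construction of totally reflexive modules
from an exact pair of zero divisors" by Henrik Holm.
-/

noncomputable section

open CategoryTheory Abelian in
lemma ext_quotSMulTop_aux {R : Type*} [CommRing R] {n : ℕ} (N M : ModuleCat R) {x : R}
    (hx : IsSMulRegular M x) (h : ∀ i < n + 1, Subsingleton (Ext N M i)) :
    ∀ i < n, Subsingleton (Ext N (ModuleCat.of R (QuotSMulTop x M)) i) := by
  intro i hi
  have zero1 := AddCommGrpCat.isZero_of_iff_subsingleton.mpr (h i (by omega))
  have zero2 := AddCommGrpCat.isZero_of_iff_subsingleton.mpr (h (i + 1) (by omega))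
  exact AddCommGrpCat.subsingleton_of_isZero <| ShortComplex.Exact.isZero_of_both_zeros
    ((Ext.covariant_sequence_exact₃' N hx.smulShortComplex_shortExact) i (i + 1) rfl)
    (zero1.eq_zero_of_src _) (zero2.eq_zero_of_tgt _)

lemma mem_smul_top_aux {R M : Type*} [CommRing R] [AddCommGroup M] [Module R M] (x : R) (m : M) :
    (Submodule.Quotient.mk m : QuotSMulTop x M) = 0 ↔ ∃ s : M, x • s = m := by
  rw [Submodule.Quotient.mk_eq_zero, Submodule.mem_smul_pointwise_iff_exists]
  simp

/-- **Lemma (2.6).** Let `Q` be a commutative noetherian local ring and let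
`f, g` be regular non-units in `Q` with `(f) ∩ (g) = (fg)`, so that the cosets
`x, y` of `f, g` form a regular exact pair of zero divisors in `A = Q/(fg)`.
If `depth Q > 2` (i.e. there is a `Q`-regular sequence of length `3` contained
in the maximal ideal), then there exists an element of `A` that is regular on
the `A`-module `A/(x, y)`, i.e. a non-unit acting injectively on `A/(x, y)`. -/
theorem exists_regular_on_quotient_of_depth {Q : Type*} [CommRing Q]
    [IsNoetherianRing Q] [IsLocalRing Q] {f g : Q}
    (hf : ¬ IsUnit f) (hg : ¬ IsUnit g)
    (hfreg : Function.Injective fun q : Q => f * q)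
    (hgreg : Function.Injective fun q : Q => g * q)
    (hfg : Ideal.span ({f} : Set Q) ⊓ Ideal.span ({g} : Set Q) =
      Ideal.span {f * g})
    (hdepth : ∃ rs : List Q, rs.length = 3 ∧
      (∀ r ∈ rs, r ∈ IsLocalRing.maximalIdeal Q) ∧
      RingTheory.Sequence.IsRegular Q rs) :
    ∃ a : Q ⧸ Ideal.span {f * g}, ¬ IsUnit a ∧
      Function.Injective
        (fun m : (Q ⧸ Ideal.span {f * g}) ⧸
            Ideal.span {Ideal.Quotient.mk (Ideal.span {f * g}) f,
              Ideal.Quotient.mk (Ideal.span {f * g}) g} => a • m) := by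
  classical
  obtain ⟨rs, hlen, hmem, hreg⟩ := hdepth
  let m := IsLocalRing.maximalIdeal Q
  let N := ModuleCat.of Q (Q ⧸ m)
  have hN : Module.annihilator Q (Q ⧸ m) = m := Ideal.annihilator_quotient
  have h0 := ModuleCat.subsingleton_ext_of_exists_isRegular m N
    (by rw [Module.support_eq_zeroLocus]; exact (congrArg (fun I : Ideal Q => PrimeSpectrum.zeroLocus (I : Set Q)) hN).subset)
    (ModuleCat.of Q Q)
    (by simpa [lt_top_iff_ne_top] using (IsLocalRing.maximalIdeal.isMaximal Q).ne_top)
    rs hmem hreg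
  rw [hlen] at h0
  have hfr : IsSMulRegular Q f := hfreg
  have hgr : IsSMulRegular (QuotSMulTop f Q) g := by
    rw [isSMulRegular_iff_right_eq_zero_of_smul]
    intro z hz
    obtain ⟨q, rfl⟩ := Submodule.Quotient.mk_surjective _ z
    rw [← Submodule.Quotient.mk_smul, mem_smul_top_aux] at hz
    obtain ⟨s, hs⟩ := hz
    simp only [smul_eq_mul] at hs
    have : g * q ∈ Ideal.span ({f} : Set Q) ⊓ Ideal.span ({g} : Set Q) :=
      ⟨Ideal.mem_span_singleton.mpr ⟨s, hs.symm⟩, Ideal.mem_span_singleton.mpr ⟨q, rfl⟩⟩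
    rw [hfg, Ideal.mem_span_singleton] at this
    obtain ⟨t, ht⟩ := this
    rw [mem_smul_top_aux]
    refine ⟨t, hgreg ?_⟩
    simp only [smul_eq_mul]
    rw [ht]; ring
  have h1 := ext_quotSMulTop_aux (n := 2) N (ModuleCat.of Q Q) hfr h0
  have h2 := ext_quotSMulTop_aux (n := 1) N (ModuleCat.of Q (QuotSMulTop f Q)) hgr h1
  have h3 := h2 0 (by norm_num)
  have h4 : Subsingleton ((Q ⧸ m) →ₗ[Q] QuotSMulTop g (QuotSMulTop f Q)) :=
    ((CategoryTheory.Abelian.Ext.addEquiv₀ (X := N)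
      (Y := ModuleCat.of Q (QuotSMulTop g (QuotSMulTop f Q)))).trans
      ModuleCat.homAddEquiv).toEquiv.subsingleton_congr.mp h3
  obtain ⟨r, hr, hrreg⟩ := IsSMulRegular.subsingleton_linearMap_iff.mp h4
  rw [hN] at hr
  have key : ∀ q a b : Q, r * q = a * f + b * g → ∃ c d : Q, q = c * f + d * g := by
    intro q a b h
    have e : r • (Submodule.Quotient.mk (Submodule.Quotient.mk q : QuotSMulTop f Q) :
        QuotSMulTop g (QuotSMulTop f Q)) = 0 := by
      rw [← Submodule.Quotient.mk_smul, mem_smul_top_aux]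
      refine ⟨Submodule.Quotient.mk b, ?_⟩
      rw [← Submodule.Quotient.mk_smul, ← Submodule.Quotient.mk_smul, ← sub_eq_zero,
        ← Submodule.Quotient.mk_sub, mem_smul_top_aux]
      refine ⟨-a, ?_⟩
      simp only [smul_eq_mul]
      rw [h]; ring
    have e2 := hrreg.right_eq_zero_of_smul e
    rw [mem_smul_top_aux] at e2
    obtain ⟨z, hz⟩ := e2
    obtain ⟨d, rfl⟩ := Submodule.Quotient.mk_surjective _ z
    rw [← Submodule.Quotient.mk_smul, ← sub_eq_zero, ← Submodule.Quotient.mk_sub,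
      mem_smul_top_aux] at hz
    obtain ⟨c, hc⟩ := hz
    simp only [smul_eq_mul] at hc
    exact ⟨-c, d, by linear_combination hc⟩
  have hle : Ideal.span {f * g} ≤ m := by
    rw [Ideal.span_singleton_le_iff_mem]
    exact m.mul_mem_right _ hf
  refine ⟨Ideal.Quotient.mk _ r, ?_, ?_⟩
  · intro hu
    have := hu.map (Ideal.Quotient.factor hle)
    rw [Ideal.Quotient.factor_mk, Ideal.Quotient.eq_zero_iff_mem.mpr hr] at this
    exact not_isUnit_zero this
  · change IsSMulRegular _ _
    rw [isSMulRegular_iff_right_eq_zero_of_smul]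
    intro z hz
    obtain ⟨w, rfl⟩ := Ideal.Quotient.mk_surjective z
    obtain ⟨q, rfl⟩ := Ideal.Quotient.mk_surjective w
    change Ideal.Quotient.mk _ (Ideal.Quotient.mk _ r * Ideal.Quotient.mk _ q) = 0 at hz
    rw [Ideal.Quotient.eq_zero_iff_mem, Ideal.mem_span_pair] at hz
    obtain ⟨a, b, hab⟩ := hz
    obtain ⟨a, rfl⟩ := Ideal.Quotient.mk_surjective a
    obtain ⟨b, rfl⟩ := Ideal.Quotient.mk_surjective b
    rw [← map_mul, ← map_mul, ← map_mul, ← map_add, Ideal.Quotient.eq,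
      Ideal.mem_span_singleton] at hab
    obtain ⟨t, ht⟩ := hab
    obtain ⟨c, d, hcd⟩ := key q a (b - f * t) (by linear_combination -ht)
    rw [Ideal.Quotient.eq_zero_iff_mem, Ideal.mem_span_pair]
    exact ⟨Ideal.Quotient.mk _ c, Ideal.Quotient.mk _ d, by rw [hcd]; simp⟩
end
end

section
/- Let A be a commutative noetherian local ring, let x, y ∈ A be an exact pair of zero divisors, and let a ∈ A. For the A-linear maps γ_a, η_a : A² → A², one has γ_a ∘ η_a = 0 = η_a ∘ γ_a, Ker γ_a = Im η_a, and Ker η_a = Im γ_a; that is, the doubly infinite complex ⋯ → A² —γ_a→ A² —η_a→ A² —γ_a→ A² → ⋯ is exact. Moreover, the A-dual complex, whose differentials are given by the transposed matrices γ_aᵗ and η_aᵗ, is also exact. -/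
/-!
Formalization of results from "Construction of totally reflexive modules
from an exact pair of zero divisors" by Henrik Holm.
-/

noncomputable section

open Matrix in
/-- The matrix `γ_a = [[x, a], [0, y]]`. -/
def gammaMat {A : Type*} [CommRing A] (x y a : A) : Matrix (Fin 2) (Fin 2) A :=
  !![x, a; 0, y]

open Matrix in
/-- The matrix `η_a = [[y, -a], [0, x]]`. -/
def etaMat {A : Type*} [CommRing A] (x y a : A) : Matrix (Fin 2) (Fin 2) A :=
  !![y, -a; 0, x]

/-- `G_a`, the cokernel of `γ_a : A² → A²`. -/
abbrev Gmod {A : Type*} [CommRing A] (x y a : A) : Type _ :=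
  (Fin 2 → A) ⧸ LinearMap.range (Matrix.toLin' (gammaMat x y a))

/-- `H_a`, the cokernel of `η_a : A² → A²`. -/
abbrev Hmod {A : Type*} [CommRing A] (x y a : A) : Type _ :=
  (Fin 2 → A) ⧸ LinearMap.range (Matrix.toLin' (etaMat x y a))

theorem upper_exact_aux {A : Type*} [CommRing A] (p q a : A)
    (hp : ∀ b : A, b * p = 0 ↔ b ∈ Ideal.span {q})
    (hq : ∀ b : A, b * q = 0 ↔ b ∈ Ideal.span {p}) :
    LinearMap.ker (Matrix.toLin' !![p, a; 0, q]) =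
      LinearMap.range (Matrix.toLin' !![q, -a; 0, p]) := by
  have hpq : q * p = 0 := (hp q).2 (Ideal.mem_span_singleton_self q)
  ext v
  simp only [LinearMap.mem_ker, LinearMap.mem_range, Matrix.toLin'_apply, funext_iff,
    Fin.forall_fin_two, Matrix.mulVec, dotProduct, Fin.sum_univ_two]
  simp
  constructor
  · rintro ⟨h1, h2⟩
    obtain ⟨w, hw⟩ := Ideal.mem_span_singleton'.1 ((hq (v 1)).1 (by linear_combination h2))
    obtain ⟨t, ht⟩ := Ideal.mem_span_singleton'.1
      ((hp (v 0 + a * w)).1 (by linear_combination h1 + a * hw))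
    refine ⟨![t, w], ?_, ?_⟩
    · simp
      linear_combination ht
    · simp
      linear_combination hw
  · rintro ⟨u, h1, h2⟩
    rw [← h1, ← h2]
    constructor
    · linear_combination u 0 * hpq
    · linear_combination u 1 * hpq

theorem lower_exact_aux {A : Type*} [CommRing A] (p q a : A)
    (hp : ∀ b : A, b * p = 0 ↔ b ∈ Ideal.span {q})
    (hq : ∀ b : A, b * q = 0 ↔ b ∈ Ideal.span {p}) :
    LinearMap.ker (Matrix.toLin' !![p, 0; a, q]) =
      LinearMap.range (Matrix.toLin' !![q, 0; -a, p]) := by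
  have hpq : q * p = 0 := (hp q).2 (Ideal.mem_span_singleton_self q)
  ext v
  simp only [LinearMap.mem_ker, LinearMap.mem_range, Matrix.toLin'_apply, funext_iff,
    Fin.forall_fin_two, Matrix.mulVec, dotProduct, Fin.sum_univ_two]
  simp
  constructor
  · rintro ⟨h1, h2⟩
    obtain ⟨w, hw⟩ := Ideal.mem_span_singleton'.1 ((hp (v 0)).1 (by linear_combination h1))
    obtain ⟨t, ht⟩ := Ideal.mem_span_singleton'.1
      ((hq (v 1 + a * w)).1 (by linear_combination h2 + a * hw))
    refine ⟨![w, t], ?_, ?_⟩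
    · simp
      linear_combination hw
    · simp
      linear_combination ht
  · rintro ⟨u, h1, h2⟩
    rw [← h1, ← h2]
    constructor
    · linear_combination u 0 * hpq
    · linear_combination u 1 * hpq

open Matrix in
/-- **Lemma (3.3).** For an exact pair of zero divisors `x, y` and any `a ∈ A`,
the maps `γ_a, η_a : A² → A²` satisfy `γ_a ∘ η_a = 0 = η_a ∘ γ_a`,
`Ker γ_a = Im η_a` and `Ker η_a = Im γ_a`, i.e. the doubly infinite complex
`⋯ → A² —γ_a→ A² —η_a→ A² → ⋯` is exact; and the dual complex, with
differentials the transposed matrices, is also exact. -/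
theorem gamma_eta_complex_exact {A : Type*} [CommRing A] [IsNoetherianRing A]
    [IsLocalRing A] {x y : A} (hxy : IsExactZeroDivisorPair x y) (a : A) :
    (Matrix.toLin' (gammaMat x y a)).comp (Matrix.toLin' (etaMat x y a)) = 0 ∧
    (Matrix.toLin' (etaMat x y a)).comp (Matrix.toLin' (gammaMat x y a)) = 0 ∧
    LinearMap.ker (Matrix.toLin' (gammaMat x y a)) =
      LinearMap.range (Matrix.toLin' (etaMat x y a)) ∧
    LinearMap.ker (Matrix.toLin' (etaMat x y a)) =
      LinearMap.range (Matrix.toLin' (gammaMat x y a)) ∧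
    LinearMap.ker (Matrix.toLin' (gammaMat x y a)ᵀ) =
      LinearMap.range (Matrix.toLin' (etaMat x y a)ᵀ) ∧
    LinearMap.ker (Matrix.toLin' (etaMat x y a)ᵀ) =
      LinearMap.range (Matrix.toLin' (gammaMat x y a)ᵀ) := by
  obtain ⟨-, -, hx, hy⟩ := hxy
  have hpq : y * x = 0 := (hx y).2 (Ideal.mem_span_singleton_self y)
  have hqp : x * y = 0 := by rw [mul_comm, hpq]
  have e1 : (gammaMat x y a)ᵀ = !![x, 0; a, y] := by
    ext i j; fin_cases i <;> fin_cases j <;> rfl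
  have e2 : (etaMat x y a)ᵀ = !![y, 0; -a, x] := by
    ext i j; fin_cases i <;> fin_cases j <;> rfl
  have k1 : gammaMat x y a * etaMat x y a = 0 := by
    ext i j; fin_cases i <;> fin_cases j <;> simp [gammaMat, etaMat, hpq, hqp, mul_comm]
  have k2 : etaMat x y a * gammaMat x y a = 0 := by
    ext i j; fin_cases i <;> fin_cases j <;> simp [gammaMat, etaMat, hpq, hqp, mul_comm]
  refine ⟨?_, ?_, upper_exact_aux x y a hx hy, ?_, ?_, ?_⟩
  · rw [← Matrix.toLin'_mul, k1, map_zero]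
  · rw [← Matrix.toLin'_mul, k2, map_zero]
  · simpa [gammaMat, etaMat] using upper_exact_aux y x (-a) hy hx
  · rw [e1, e2]
    exact lower_exact_aux x y a hx hy
  · rw [e1, e2]
    simpa using lower_exact_aux y x (-a) hy hx
end
end

section
/- Let A be a commutative noetherian local ring, let x, y ∈ A be an exact pair of zero divisors, and let a ∈ A. Then the A-modules G_a = coker γ_a and H_a = coker η_a are totally reflexive. Furthermore, G_a and H_a are each other's A-duals: G_a ≅ Hom_A(H_a, A) and H_a ≅ Hom_A(G_a, A) as A-modules. -/
/-!
Formalization of results from "Construction of totally reflexive modules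
from an exact pair of zero divisors" by Henrik Holm.
-/

noncomputable section

universe u

open CategoryTheory in
/-- A finitely generated `A`-module `G` is *totally reflexive* if
`Ext_A^i(G, A) = 0` and `Ext_A^i(Hom_A(G, A), A) = 0` for all `i > 0`, and the
biduality map `G → Hom_A(Hom_A(G, A), A)` is an isomorphism. -/
def IsTotallyReflexive (A : Type u) [CommRing A] (M : Type u)
    [AddCommGroup M] [Module A M] : Prop :=
  Module.Finite A M ∧
  (∀ i : ℕ, 0 < i → Subsingleton
    (((Ext A (ModuleCat A) i).obj (Opposite.op (ModuleCat.of A M))).obj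
      (ModuleCat.of A A))) ∧
  (∀ i : ℕ, 0 < i → Subsingleton
    (((Ext A (ModuleCat A) i).obj
      (Opposite.op (ModuleCat.of A (Module.Dual A M)))).obj (ModuleCat.of A A))) ∧
  Function.Bijective (Module.Dual.eval A M)

open CategoryTheory in
theorem ext_aux {A : Type u} [CommRing A] {F M : Type u} [AddCommGroup F] [Module A F]
    [AddCommGroup M] [Module A M] [Module.Projective A F]
    (f g : F →ₗ[A] F) (p : F →ₗ[A] M) (hp : Function.Surjective p)
    (hfp : Function.Exact f p) (hfg : Function.Exact f g) (hgf : Function.Exact g f)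
    (dfg : ∀ φ : F →ₗ[A] A, φ ∘ₗ f = 0 → ∃ ψ : F →ₗ[A] A, ψ ∘ₗ g = φ)
    (dgf : ∀ φ : F →ₗ[A] A, φ ∘ₗ g = 0 → ∃ ψ : F →ₗ[A] A, ψ ∘ₗ f = φ)
    (i : ℕ) (hi : 0 < i) :
    Subsingleton (((Ext A (ModuleCat A) i).obj (Opposite.op (ModuleCat.of A M))).obj
      (ModuleCat.of A A)) := by
  have h1 : ModuleCat.ofHom g ≫ ModuleCat.ofHom f = 0 := by
    ext v; exact hgf.apply_apply_eq_zero v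
  have h2 : ModuleCat.ofHom f ≫ ModuleCat.ofHom g = 0 := by
    ext v; exact hfg.apply_apply_eq_zero v
  let K : ChainComplex (ModuleCat.{u} A) ℕ :=
    HomologicalComplex.alternatingConst (ModuleCat.of A F) (φ := ModuleCat.ofHom g)
      (ψ := ModuleCat.ofHom f) h1 h2 fun _ _ => ComplexShape.down_nat_odd_add
  have Ke : ∀ n, Even n → K.d (n+1) n = ModuleCat.ofHom f := by
    intro n hn
    exact (dif_pos (by simp)).trans (dif_neg (by simpa [Nat.even_add_one] using hn))
  have Ko : ∀ n, ¬ Even n → K.d (n+1) n = ModuleCat.ofHom g := by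
    intro n hn
    exact (dif_pos (by simp)).trans (dif_pos (by simpa [Nat.even_add_one] using hn))
  let q : K.X 0 ⟶ ModuleCat.of A M := ModuleCat.ofHom p
  have hq : K.d 1 0 ≫ q = 0 := by
    rw [Ke 0 (by simp)]
    ext v; exact hfp.apply_apply_eq_zero v
  have exK : ∀ n, K.ExactAt (n+1) := by
    intro n
    rw [HomologicalComplex.exactAt_iff' _ (n + 2) (n + 1) n (by simp) (by simp),
      ShortComplex.moduleCat_exact_iff]
    intro (v : F) hv
    change K.d (n+1) n v = 0 at hv
    change ∃ w : F, K.d (n+1+1) (n+1) w = v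
    by_cases hn : Even n
    · rw [Ke n hn] at hv
      rw [Ko (n+1) (by simpa [Nat.even_add_one] using hn)]
      exact (hgf v).1 hv
    · rw [Ko n hn] at hv
      rw [Ke (n+1) (by simpa [Nat.even_add_one] using hn)]
      exact (hfg v).1 hv
  let P : ProjectiveResolution (ModuleCat.of A M) :=
    { complex := K
      projective := fun _ => inferInstanceAs (Projective (ModuleCat.of A F))
      π := (K.toSingle₀Equiv _).symm ⟨q, hq⟩
      quasiIso := ⟨fun n => by
        cases n with
        | zero =>
          rw [ChainComplex.quasiIsoAt₀_iff, ShortComplex.quasiIso_iff_of_zeros' _ rfl rfl rfl]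
          constructor
          · rw [ShortComplex.moduleCat_exact_iff]
            intro (v : F) hv
            change ∃ w : F, K.d 1 0 w = v
            rw [Ke 0 (by simp)]
            refine (hfp v).1 ?_
            simpa [ChainComplex.toSingle₀Equiv, q] using! hv
          · rw [ModuleCat.epi_iff_surjective]
            simpa [ChainComplex.toSingle₀Equiv, q] using! hp
        | succ n =>
          rw [quasiIsoAt_iff_exactAt' (hL := ChainComplex.exactAt_succ_single_obj ..)]
          exact exK n⟩ }
  obtain ⟨n, rfl⟩ : ∃ n, i = n + 1 := ⟨i - 1, by omega⟩
  rw [← ModuleCat.isZero_iff_subsingleton] 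
  refine Limits.IsZero.of_iso ?_ (P.isoExt (n+1) (ModuleCat.of A A))
  rw [← HomologicalComplex.exactAt_iff_isZero_homology,
    HomologicalComplex.exactAt_iff' _ n (n + 1) (n+2) (by simp) (by simp),
      ShortComplex.moduleCat_exact_iff]
  intro (v : ModuleCat.of A F ⟶ ModuleCat.of A A) hv
  change K.d (n+1+1) (n+1) ≫ v = 0 at hv
  change ∃ w : ModuleCat.of A F ⟶ ModuleCat.of A A, K.d (n+1) n ≫ w = v
  by_cases hn : Even n
  · rw [Ko (n+1) (by simpa [Nat.even_add_one] using hn)] at hv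
    rw [Ke n hn]
    obtain ⟨ψ, h⟩ := dgf v.hom (congrArg ModuleCat.Hom.hom hv)
    exact ⟨ModuleCat.ofHom ψ, by ext1; exact h⟩
  · rw [Ke (n+1) (by simpa [Nat.even_add_one] using hn)] at hv
    rw [Ko n hn]
    obtain ⟨ψ, h⟩ := dfg v.hom (congrArg ModuleCat.Hom.hom hv)
    exact ⟨ModuleCat.ofHom ψ, by ext1; exact h⟩

section
variable {A : Type u} [CommRing A]

lemma gamma_apply (x y a : A) (v : Fin 2 → A) :
    Matrix.toLin' (gammaMat x y a) v = ![x * v 0 + a * v 1, y * v 1] := by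
  ext i; fin_cases i <;> simp [gammaMat, Matrix.mulVec, dotProduct, Fin.sum_univ_two]

lemma eta_eq (x y a : A) : etaMat x y a = gammaMat y x (-a) := rfl

lemma func_apply (φ : (Fin 2 → A) →ₗ[A] A) (v : Fin 2 → A) :
    φ v = v 0 * φ ![1, 0] + v 1 * φ ![0, 1] := by
  have : v = v 0 • ![1, 0] + v 1 • ![0, 1] := by
    ext i; fin_cases i <;> simp
  conv_lhs => rw [this]
  simp only [map_add, map_smul, smul_eq_mul]

lemma exact_pair_symm {x y : A} (h : IsExactZeroDivisorPair x y) : IsExactZeroDivisorPair y x :=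
  ⟨h.2.1, h.1, h.2.2.2, h.2.2.1⟩

lemma pair_mul {x y : A} (h : IsExactZeroDivisorPair x y) : x * y = 0 :=
  (h.2.2.2 x).2 (Ideal.mem_span_singleton_self x)

lemma pair_left {x y : A} (h : IsExactZeroDivisorPair x y) {b : A} (hb : x * b = 0) :
    ∃ c, b = y * c := by
  have := (h.2.2.1 b).1 (by rw [mul_comm]; exact hb)
  exact Ideal.mem_span_singleton.1 this

lemma exact_aux {x y : A} (h : IsExactZeroDivisorPair x y) (a : A) :
    Function.Exact (Matrix.toLin' (gammaMat x y a)) (Matrix.toLin' (gammaMat y x (-a))) := by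
  have hm := pair_mul h
  intro v
  constructor
  · intro hv
    rw [gamma_apply] at hv
    have h0 := congrFun hv 0
    have h1 := congrFun hv 1
    simp at h0 h1
    obtain ⟨w, hw⟩ := pair_left h h1
    obtain ⟨s, hs⟩ := pair_left (exact_pair_symm h) (b := v 0 - a * w) (by
      rw [hw] at h0; linear_combination h0)
    refine ⟨![s, w], ?_⟩
    rw [gamma_apply]
    ext i
    fin_cases i
    · simp; linear_combination -hs
    · simp; linear_combination -hw
  · rintro ⟨w, rfl⟩
    rw [gamma_apply, gamma_apply]
    ext i
    fin_cases i
    · simp; linear_combination w 0 * hm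
    · simp; linear_combination w 1 * hm

lemma exact_aux' {x y : A} (h : IsExactZeroDivisorPair x y) (a : A) :
    Function.Exact (Matrix.toLin' (gammaMat y x (-a))) (Matrix.toLin' (gammaMat x y a)) := by
  simpa using exact_aux (exact_pair_symm h) (-a)

lemma func_rel {x y a : A} (φ : (Fin 2 → A) →ₗ[A] A)
    (hφ : ∀ v, φ (Matrix.toLin' (gammaMat x y a) v) = 0) :
    x * φ ![1, 0] = 0 ∧ a * φ ![1, 0] + y * φ ![0, 1] = 0 := by
  have h0 := hφ ![1, 0]
  have h1 := hφ ![0, 1]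
  rw [gamma_apply, func_apply] at h0 h1
  simp at h0 h1
  exact ⟨h0, h1⟩

lemma dual_aux {x y : A} (h : IsExactZeroDivisorPair x y) (a : A) (φ : (Fin 2 → A) →ₗ[A] A)
    (hφ : ∀ v, φ (Matrix.toLin' (gammaMat x y a) v) = 0) :
    ∃ c d, φ ![1, 0] = y * c ∧ φ ![0, 1] = x * d - a * c := by
  obtain ⟨h0, h1⟩ := func_rel φ hφ
  obtain ⟨c, hc⟩ := pair_left h h0
  obtain ⟨d, hd⟩ := pair_left (exact_pair_symm h) (b := φ ![0, 1] + a * c) (by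
    rw [hc] at h1; linear_combination h1)
  exact ⟨c, d, hc, by linear_combination hd⟩

lemma dual_exact {x y : A} (h : IsExactZeroDivisorPair x y) (a : A) (φ : (Fin 2 → A) →ₗ[A] A)
    (hφ : φ ∘ₗ Matrix.toLin' (gammaMat x y a) = 0) :
    ∃ ψ : (Fin 2 → A) →ₗ[A] A, ψ ∘ₗ Matrix.toLin' (gammaMat y x (-a)) = φ := by
  obtain ⟨c, d, hc, hd⟩ := dual_aux h a φ (fun v => LinearMap.congr_fun hφ v)
  refine ⟨c • LinearMap.proj 0 + d • LinearMap.proj 1, ?_⟩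
  apply LinearMap.ext
  intro v
  rw [func_apply φ, hc, hd, LinearMap.comp_apply, gamma_apply]
  simp
  ring

lemma dual_exact' {x y : A} (h : IsExactZeroDivisorPair x y) (a : A) (φ : (Fin 2 → A) →ₗ[A] A)
    (hφ : φ ∘ₗ Matrix.toLin' (gammaMat y x (-a)) = 0) :
    ∃ ψ : (Fin 2 → A) →ₗ[A] A, ψ ∘ₗ Matrix.toLin' (gammaMat x y a) = φ := by
  simpa using dual_exact (exact_pair_symm h) (-a) φ hφ

/-- Ext vanishing for any module presented by `γ_a`. -/
lemma ext_gamma {x y : A} (h : IsExactZeroDivisorPair x y) (a : A) {M : Type u}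
    [AddCommGroup M] [Module A M] (e : Gmod x y a ≃ₗ[A] M) (i : ℕ) (hi : 0 < i) :
    Subsingleton (((Ext A (ModuleCat A) i).obj
      (Opposite.op (ModuleCat.of A M))).obj (ModuleCat.of A A)) := by
  refine ext_aux (Matrix.toLin' (gammaMat x y a)) (Matrix.toLin' (gammaMat y x (-a)))
    (e.toLinearMap ∘ₗ Submodule.mkQ _) (e.surjective.comp (Submodule.mkQ_surjective _)) ?_
    (exact_aux h a) (exact_aux' h a) (dual_exact h a) (dual_exact' h a) i hi
  intro v
  simp

/-- The pairing on `A²` inducing the duality. -/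
def pair0 (x y a : A) : (Fin 2 → A) →ₗ[A] (Fin 2 → A) →ₗ[A] A :=
  LinearMap.mk₂ A (fun w v => (x * w 0 + a * w 1) * v 1 - y * w 1 * v 0)
    (by intros; simp; ring) (by intros; simp; ring) (by intros; simp; ring)
    (by intros; simp; ring)

lemma pair0_apply (x y a : A) (w v : Fin 2 → A) :
    pair0 x y a w v = (x * w 0 + a * w 1) * v 1 - y * w 1 * v 0 := rfl

/-- The pairing `G → A² → A`. -/
def pair1 {x y : A} (h : IsExactZeroDivisorPair x y) (a : A) :
    Gmod x y a →ₗ[A] (Fin 2 → A) →ₗ[A] A :=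
  Submodule.liftQ _ (pair0 x y a).flip (by
    rintro _ ⟨v, rfl⟩
    rw [LinearMap.mem_ker]
    apply LinearMap.ext
    intro w
    rw [LinearMap.flip_apply, gamma_apply, pair0_apply]
    have hm := pair_mul h
    simp
    linear_combination (w 0 * v 1 - w 1 * v 0) * hm)

/-- The pairing `H → G → A`. -/
def pair2 {x y : A} (h : IsExactZeroDivisorPair x y) (a : A) :
    Hmod x y a →ₗ[A] Gmod x y a →ₗ[A] A :=
  Submodule.liftQ _ (pair1 h a).flip (by
    rintro _ ⟨w, rfl⟩
    rw [LinearMap.mem_ker]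
    apply LinearMap.ext
    intro v
    obtain ⟨v, rfl⟩ := Submodule.mkQ_surjective _ v
    rw [eta_eq, gamma_apply]
    change pair0 x y a _ v = 0
    rw [pair0_apply]
    have hm := pair_mul h
    simp
    linear_combination (w 0 * v 1 - w 1 * v 0) * hm)

lemma pair2_mk {x y : A} (h : IsExactZeroDivisorPair x y) (a : A) (w v : Fin 2 → A) :
    pair2 h a (Submodule.mkQ _ w) (Submodule.mkQ _ v) =
      (x * w 0 + a * w 1) * v 1 - y * w 1 * v 0 := rfl

lemma pair2_left {x y : A} (h : IsExactZeroDivisorPair x y) (a : A) :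
    Function.Bijective (pair2 h a) := by
  constructor
  · rw [injective_iff_map_eq_zero]
    intro w hw
    obtain ⟨w, rfl⟩ := Submodule.mkQ_surjective _ w
    have h0 := LinearMap.congr_fun hw (Submodule.mkQ _ ![1, 0])
    have h1 := LinearMap.congr_fun hw (Submodule.mkQ _ ![0, 1])
    rw [pair2_mk] at h0 h1
    simp at h0 h1
    rw [Submodule.mkQ_apply, Submodule.Quotient.mk_eq_zero]
    refine (exact_aux' h a w).1 ?_
    rw [gamma_apply, h0, h1]
    ext i; fin_cases i <;> rfl
  · intro φ
    obtain ⟨c, d, hc, hd⟩ := dual_aux h a (φ ∘ₗ Submodule.mkQ _) (fun v => by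
      rw [LinearMap.comp_apply, Submodule.mkQ_apply, (Submodule.Quotient.mk_eq_zero _).2 (LinearMap.mem_range_self _ v),
        map_zero])
    refine ⟨Submodule.mkQ _ ![d, -c], ?_⟩
    apply LinearMap.ext
    intro v
    obtain ⟨v, rfl⟩ := Submodule.mkQ_surjective _ v
    rw [pair2_mk, ← LinearMap.comp_apply φ, func_apply (φ ∘ₗ _), hc, hd]
    simp
    ring

lemma pair2_right {x y : A} (h : IsExactZeroDivisorPair x y) (a : A) :
    Function.Bijective (pair2 h a).flip := by
  constructor
  · rw [injective_iff_map_eq_zero]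
    intro v hv
    obtain ⟨v, rfl⟩ := Submodule.mkQ_surjective _ v
    have h0 := LinearMap.congr_fun hv (Submodule.mkQ _ ![1, 0])
    have h1 := LinearMap.congr_fun hv (Submodule.mkQ _ ![0, 1])
    rw [LinearMap.flip_apply, pair2_mk] at h0 h1
    simp at h0 h1
    rw [Submodule.mkQ_apply, Submodule.Quotient.mk_eq_zero]
    refine (exact_aux h a v).1 ?_
    rw [gamma_apply]
    ext i
    fin_cases i
    · simp; linear_combination -h1
    · simpa using h0
  · intro φ
    obtain ⟨c, d, hc, hd⟩ := dual_aux (exact_pair_symm h) (-a) (φ ∘ₗ Submodule.mkQ _) (fun v => by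
      rw [← eta_eq]
      rw [LinearMap.comp_apply, Submodule.mkQ_apply, (Submodule.Quotient.mk_eq_zero _).2 (LinearMap.mem_range_self _ v),
        map_zero])
    refine ⟨Submodule.mkQ _ ![-d, c], ?_⟩
    apply LinearMap.ext
    intro w
    obtain ⟨w, rfl⟩ := Submodule.mkQ_surjective _ w
    rw [LinearMap.flip_apply, pair2_mk, ← LinearMap.comp_apply φ, func_apply (φ ∘ₗ _), hc, hd]
    simp
    ring

end


/-- **Proposition (3.4).** For an exact pair of zero divisors `x, y` and any
`a ∈ A`, the modules `G_a = coker γ_a` and `H_a = coker η_a` are totally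
reflexive, and they are each other's duals: `G_a ≅ Hom_A(H_a, A)` and
`H_a ≅ Hom_A(G_a, A)`. -/
theorem isTotallyReflexive_G_H {A : Type u} [CommRing A] [IsNoetherianRing A]
    [IsLocalRing A] {x y : A} (hxy : IsExactZeroDivisorPair x y) (a : A) :
    IsTotallyReflexive A (Gmod x y a) ∧ IsTotallyReflexive A (Hmod x y a) ∧
    Nonempty (Gmod x y a ≃ₗ[A] Module.Dual A (Hmod x y a)) ∧
    Nonempty (Hmod x y a ≃ₗ[A] Module.Dual A (Gmod x y a)) := by
  have : (pair2 hxy a).IsPerfPair := ⟨pair2_left hxy a, pair2_right hxy a⟩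
  let eH : Hmod x y a ≃ₗ[A] Module.Dual A (Gmod x y a) :=
    LinearEquiv.ofBijective (pair2 hxy a) (pair2_left hxy a)
  let eG : Gmod x y a ≃ₗ[A] Module.Dual A (Hmod x y a) :=
    LinearEquiv.ofBijective (pair2 hxy a).flip (pair2_right hxy a)
  have hs := exact_pair_symm hxy
  have rG : Module.IsReflexive A (Gmod x y a) := .of_isPerfPair (pair2 hxy a).flip
  have rH : Module.IsReflexive A (Hmod x y a) := .of_isPerfPair (pair2 hxy a)
  refine ⟨⟨inferInstance, ?_, ?_, Module.bijective_dual_eval A _⟩,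
    ⟨inferInstance, ?_, ?_, Module.bijective_dual_eval A _⟩, ⟨eG⟩, ⟨eH⟩⟩
  · exact ext_gamma hxy a (LinearEquiv.refl A _)
  · exact ext_gamma hs (-a) eH
  · exact ext_gamma hs (-a) (LinearEquiv.refl A (Hmod x y a))
  · exact ext_gamma hxy a eG
end
end

section
/- Let A be a commutative noetherian local ring, let x, y ∈ A be an exact pair of zero divisors, and let a, b ∈ A. Then for every integer i there are isomorphisms of A-modules: (a) Ext_A^i(H_b, G_a) ≅ Ext_A^i(H_a, G_b); (b) Ext_A^i(G_a, H_b) ≅ Ext_A^i(G_b, H_a); (c) Ext_A^i(G_a, G_b) ≅ Ext_A^i(H_b, H_a). -/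
/-!
Formalization of results from "Construction of totally reflexive modules
from an exact pair of zero divisors" by Henrik Holm.
-/

noncomputable section

universe u

open CategoryTheory

section aux
variable {A : Type u} [CommRing A]

lemma sc_homology_iso (S : ShortComplex (ModuleCat.{u} A)) (K : Type u) [AddCommGroup K] [Module A K]
    (f : K →ₗ[A] S.X₂) (L : Submodule A K)
    (hf : ∀ k, S.g.hom (f k) = 0)
    (hs : ∀ z : S.X₂, S.g.hom z = 0 → ∃ k w, z = f k + S.f.hom w)
    (hL : ∀ k, k ∈ L ↔ ∃ w, S.f.hom w = f k) :
    Nonempty (S.homology ≅ ModuleCat.of A (K ⧸ L)) := by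
  let f' : K →ₗ[A] LinearMap.ker S.g.hom := f.codRestrict _ hf
  let φ : K →ₗ[A] (LinearMap.ker S.g.hom ⧸ LinearMap.range S.moduleCatToCycles) :=
    (LinearMap.range S.moduleCatToCycles).mkQ ∘ₗ f'
  have hφ : Function.Surjective φ := by
    intro t
    obtain ⟨⟨z, hz⟩, rfl⟩ := Submodule.mkQ_surjective _ t
    obtain ⟨k, w, h⟩ := hs z hz
    refine ⟨k, ?_⟩
    apply (Submodule.Quotient.eq _).2
    refine ⟨-w, ?_⟩
    apply Subtype.ext
    change S.f.hom (-w) = f k - z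
    rw [h, map_neg]; abel
  have hk : LinearMap.ker φ = L := by
    ext k
    rw [hL]
    simp only [φ, LinearMap.mem_ker, LinearMap.comp_apply, Submodule.mkQ_apply,
      Submodule.Quotient.mk_eq_zero, LinearMap.mem_range]
    constructor
    · rintro ⟨w, h⟩
      exact ⟨w, congrArg Subtype.val h⟩
    · rintro ⟨w, h⟩
      exact ⟨w, Subtype.ext h⟩
  subst hk
  exact ⟨S.moduleCatHomologyIso ≪≫ (φ.quotKerEquivOfSurjective hφ).symm.toModuleIso⟩

abbrev F2 (A : Type u) [CommRing A] : ModuleCat.{u} A := ModuleCat.of A (Fin 2 → A)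

structure Good (p q : Matrix (Fin 2) (Fin 2) A) : Prop where
  pq : p * q = 0
  qp : q * p = 0
  ep : ∀ v, p.mulVec v = 0 → ∃ w, q.mulVec w = v
  eq : ∀ v, q.mulVec v = 0 → ∃ w, p.mulVec w = v

abbrev Cok (p : Matrix (Fin 2) (Fin 2) A) : Type u :=
  (Fin 2 → A) ⧸ LinearMap.range (Matrix.toLin' p)

variable {p q : Matrix (Fin 2) (Fin 2) A}

abbrev mm (p : Matrix (Fin 2) (Fin 2) A) : F2 A ⟶ F2 A := ModuleCat.ofHom (Matrix.toLin' p)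

lemma mm_comp (h : p * q = 0) : mm q ≫ mm p = 0 := by
  rw [← ModuleCat.ofHom_comp, ← Matrix.toLin'_mul, h]; simp

def cx (h : Good p q) : ChainComplex (ModuleCat.{u} A) ℕ :=
  HomologicalComplex.alternatingConst (F2 A) (φ := mm q) (ψ := mm p) (mm_comp h.pq) (mm_comp h.qp)
    (fun _ _ => ComplexShape.down_nat_odd_add)

lemma cx_d_even (h : Good p q) (i j : ℕ) (hij : j + 1 = i) (hi : Even i) : (cx h).d i j = mm q := by
  subst hij
  change (if hij : _ then if hi : _ then mm q else mm p else 0) = _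
  exact (dif_pos rfl).trans (dif_pos hi)
lemma cx_d_odd (h : Good p q) (i j : ℕ) (hij : j + 1 = i) (hi : Odd i) : (cx h).d i j = mm p := by
  subst hij
  change (if hij : _ then if hi : _ then mm q else mm p else 0) = _
  exact (dif_pos rfl).trans (dif_neg (Nat.not_even_iff_odd.2 hi))

def cxπ (h : Good p q) : cx h ⟶ (ChainComplex.single₀ _).obj (ModuleCat.of A (Cok p)) :=
  ((cx h).toSingle₀Equiv _).symm ⟨ModuleCat.ofHom (Submodule.mkQ _), by
    rw [cx_d_odd h 1 0 rfl odd_one]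
    apply ModuleCat.hom_ext
    exact LinearMap.range_mkQ_comp _⟩

lemma sc_exact (h : Good p q) : (ShortComplex.mk (mm q) (mm p) (mm_comp h.pq)).Exact := by
  rw [ShortComplex.moduleCat_exact_iff]
  intro v hv
  obtain ⟨w, hw⟩ := h.ep v (by simpa using hv)
  exact ⟨w, by simpa using hw⟩

lemma cx_quasi (h : Good p q) : QuasiIso (cxπ h) where
  quasiIsoAt m := by
    cases m with
    | zero =>
      rw [ChainComplex.quasiIsoAt₀_iff, ShortComplex.quasiIso_iff_of_zeros' _ rfl rfl rfl]
      constructor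
      · rw [ShortComplex.moduleCat_exact_iff]
        intro v hv
        change Submodule.mkQ _ v = 0 at hv
        obtain ⟨w, hw⟩ := (Submodule.Quotient.mk_eq_zero _).1 hv
        refine ⟨w, ?_⟩
        change ((cx h).d 1 0).hom w = v
        rw [cx_d_odd h 1 0 rfl odd_one]
        exact hw
      · rw [ModuleCat.epi_iff_surjective]
        exact Submodule.mkQ_surjective _
    | succ m =>
      rw [quasiIsoAt_iff_exactAt' (hL := ChainComplex.exactAt_succ_single_obj ..),
          HomologicalComplex.exactAt_iff' _ (m + 2) (m + 1) m (by simp) (by simp)]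
      rcases Nat.even_or_odd (m+1) with hm | hm
      · exact (ShortComplex.exact_iff_of_iso (HomologicalComplex.alternatingConstScIsoEven (F2 A) _ _ _ rfl rfl hm)).2 (sc_exact ⟨h.qp, h.pq, h.eq, h.ep⟩)
      · exact (ShortComplex.exact_iff_of_iso (HomologicalComplex.alternatingConstScIsoOdd (F2 A) _ _ _ rfl rfl hm)).2 (sc_exact h)

def res (h : Good p q) : ProjectiveResolution (ModuleCat.of A (Cok p)) where
  complex := cx h
  projective _ := inferInstanceAs (Projective (F2 A))
  π := cxπ h
  quasiIso := cx_quasi h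


/-- differential computation -/
lemma ext_iso (h : Good p q) (N : Type u) [AddCommGroup N] [Module A N] (i : ℕ)
    (P Q : Matrix (Fin 2) (Fin 2) A)
    (hP : (cx h).d i ((ComplexShape.up ℕ).prev i) = mm P) (hQ : (cx h).d (i + 1) i = mm Q)
    (K : Type u) [AddCommGroup K] [Module A K]
    (f : K →ₗ[A] ((Fin 2 → A) →ₗ[A] N)) (L : Submodule A K)
    (hf : ∀ k, f k ∘ₗ Q.toLin' = 0)
    (hs : ∀ z : (Fin 2 → A) →ₗ[A] N, z ∘ₗ Q.toLin' = 0 → ∃ k w, z = f k + w ∘ₗ P.toLin')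
    (hL : ∀ k, k ∈ L ↔ ∃ w : (Fin 2 → A) →ₗ[A] N, w ∘ₗ P.toLin' = f k) :
    Nonempty ((((Ext A (ModuleCat A) i).obj
          (Opposite.op (ModuleCat.of A (Cok p)))).obj (ModuleCat.of A N)) ≅
            ModuleCat.of A (K ⧸ L)) := by
  let C := (res h).complex.linearYonedaObj A (ModuleCat.of A N)
  have e1 := (res h).isoExt (R := A) i (ModuleCat.of A N)
  have e2 : C.homology i ≅ (C.sc' ((ComplexShape.up ℕ).prev i) i (i+1)).homology :=
    ShortComplex.homologyMapIso (C.isoSc' _ i (i+1) rfl (by simp))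
  let f' : K →ₗ[A] (F2 A ⟶ ModuleCat.of A N) :=
    (ModuleCat.homLinearEquiv (S := A) (M := F2 A) (N := ModuleCat.of A N)).symm.toLinearMap ∘ₗ f
  have hC1 : ∀ z : F2 A ⟶ ModuleCat.of A N, (C.d i (i+1)).hom z = mm Q ≫ z := by
    intro z
    rw [← hQ]; rfl
  have hC2 : ∀ z : F2 A ⟶ ModuleCat.of A N,
      (C.d ((ComplexShape.up ℕ).prev i) i).hom z = mm P ≫ z := by
    intro z
    rw [← hP]; rfl
  obtain ⟨e3⟩ := sc_homology_iso (C.sc' ((ComplexShape.up ℕ).prev i) i (i+1)) K f' L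
    (fun k => (hC1 _).trans (ModuleCat.hom_ext (hf k)))
    (fun z hz => by
      obtain ⟨k, w, hk⟩ := hs (ModuleCat.Hom.hom (A := F2 A) (B := ModuleCat.of A N) z)
        (congrArg ModuleCat.Hom.hom ((hC1 z).symm.trans hz))
      refine ⟨k, ModuleCat.ofHom (X := Fin 2 → A) w, ?_⟩
      refine Eq.trans ?_ (congrArg (fun t => f' k + t) (hC2 (ModuleCat.ofHom (X := Fin 2 → A) w)).symm)
      exact ModuleCat.hom_ext hk)
    (fun k => by
      rw [hL]
      constructor
      · rintro ⟨w, hw⟩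
        exact ⟨ModuleCat.ofHom (X := Fin 2 → A) w, (hC2 _).trans (ModuleCat.hom_ext hw)⟩
      · rintro ⟨w, hw⟩
        exact ⟨ModuleCat.Hom.hom (A := F2 A) (B := ModuleCat.of A N) w,
          congrArg ModuleCat.Hom.hom ((hC2 w).symm.trans hw)⟩)
  exact ⟨e1 ≪≫ e2 ≪≫ e3⟩


local notation "M2" => Matrix (Fin 2) (Fin 2)

lemma Good.symm (h : Good p q) : Good q p := ⟨h.qp, h.pq, h.eq, h.ep⟩

lemma Good.left (h : Good p q) (Z : M2 A) (hZ : p * Z = 0) : ∃ V, Z = q * V := by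
  have : ∀ j, ∃ w, q.mulVec w = fun i => Z i j := fun j => h.ep _ (by
    ext i
    exact congrFun (congrFun hZ i) j)
  choose w hw using this
  refine ⟨Matrix.of fun i j => w j i, ?_⟩
  ext i j
  exact (congrFun (hw j) i).symm

/-- exactness on the right -/
lemma Good.right (h : Good p p.adjugate) (Z : M2 A) (hZ : Z * p = 0) :
    ∃ V, Z = V * p.adjugate := by
  have h1 : p.adjugate * Z.adjugate = 0 := by
    rw [← Matrix.adjugate_mul_distrib, hZ]; simp
  obtain ⟨V, hV⟩ := h.symm.left _ h1
  refine ⟨V.adjugate, ?_⟩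
  rw [← Matrix.adjugate_mul_distrib, ← hV, Matrix.adjugate_adjugate']
  simp

lemma adj_adj (p : M2 A) : p.adjugate.adjugate = p := by
  rw [Matrix.adjugate_adjugate']; simp

def mk2 (p' : M2 A) : M2 A →ₗ[A] ((Fin 2 → A) →ₗ[A] Cok p') :=
  (LinearMap.compRight A (Submodule.mkQ (LinearMap.range (Matrix.toLin' p')))) ∘ₗ
    (Matrix.toLin' (R := A) (m := Fin 2) (n := Fin 2)).toLinearMap

lemma mk2_comp (p' Z Q : M2 A) : mk2 p' Z ∘ₗ Q.toLin' = mk2 p' (Z * Q) := by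
  simp [mk2, Matrix.toLin'_mul]; rfl

lemma mk2_surj (p' : M2 A) (z : (Fin 2 → A) →ₗ[A] Cok p') : ∃ Z, mk2 p' Z = z := by
  obtain ⟨g, hg⟩ := Module.projective_lifting_property
    (Submodule.mkQ (LinearMap.range (Matrix.toLin' p'))) z (Submodule.mkQ_surjective _)
  refine ⟨LinearMap.toMatrix' g, ?_⟩
  simpa [mk2] using hg

lemma mk2_zero {p' q' : M2 A} (h' : Good p' q') (Z : M2 A) : mk2 p' Z = 0 ↔ q' * Z = 0 := by
  constructor
  · intro h
    have : ∀ v, ∃ w, p'.mulVec w = Z.mulVec v := fun v => by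
      obtain ⟨w, hw⟩ := (Submodule.Quotient.mk_eq_zero _).1 (LinearMap.congr_fun h v)
      exact ⟨w, by simpa using hw⟩
    apply Matrix.toLin'.injective
    apply LinearMap.ext
    intro v
    obtain ⟨w, hw⟩ := this v
    rw [Matrix.toLin'_apply, ← Matrix.mulVec_mulVec, ← hw, Matrix.mulVec_mulVec, h'.qp]
    simp
  · intro h
    obtain ⟨V, rfl⟩ := h'.symm.left Z h
    apply LinearMap.ext
    intro v
    refine (Submodule.Quotient.mk_eq_zero _).2 ⟨V.mulVec v, ?_⟩
    simp

lemma ext_mat (h : Good p q) {p' q' : M2 A} (h' : Good p' q') (i : ℕ)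
    (P Q : M2 A)
    (hP : (cx h).d i ((ComplexShape.up ℕ).prev i) = mm P) (hQ : (cx h).d (i + 1) i = mm Q)
    (K : Type u) [AddCommGroup K] [Module A K]
    (m : K →ₗ[A] M2 A) (L : Submodule A K)
    (hf : ∀ k, q' * (m k * Q) = 0)
    (hs : ∀ Z : M2 A, q' * (Z * Q) = 0 → ∃ k, m k = Z)
    (hL : ∀ k, k ∈ L ↔ ∃ Y V : M2 A, m k = Y * P + p' * V) :
    Nonempty ((((Ext A (ModuleCat A) i).obj
          (Opposite.op (ModuleCat.of A (Cok p)))).obj (ModuleCat.of A (Cok p'))) ≅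
            ModuleCat.of A (K ⧸ L)) := by
  refine ext_iso h (Cok p') i P Q hP hQ K (mk2 p' ∘ₗ m) L ?_ ?_ ?_
  · intro k
    rw [LinearMap.comp_apply, mk2_comp, mk2_zero h', hf]
  · intro z hz
    obtain ⟨Z, rfl⟩ := mk2_surj p' z
    rw [mk2_comp, mk2_zero h'] at hz
    obtain ⟨k, rfl⟩ := hs Z hz
    exact ⟨k, 0, by simp⟩
  · intro k
    rw [hL]
    constructor
    · rintro ⟨Y, V, hk⟩
      refine ⟨mk2 p' Y, ?_⟩
      rw [mk2_comp, LinearMap.comp_apply, hk, map_add, (mk2_zero h' (p' * V)).2, add_zero]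
      rw [← mul_assoc, h'.qp, zero_mul]
    · rintro ⟨w, hw⟩
      obtain ⟨Y, rfl⟩ := mk2_surj p' w
      rw [mk2_comp, LinearMap.comp_apply, eq_comm, ← sub_eq_zero, ← map_sub, mk2_zero h'] at hw
      obtain ⟨V, hV⟩ := h'.symm.left _ hw
      exact ⟨Y, V, by rw [← hV]; abel⟩

def K1 (q q' : M2 A) : Submodule A (M2 A) where
  carrier := {Z | q' * (Z * q) = 0}
  zero_mem' := by simp
  add_mem' := by
    intro a b ha hb
    simp only [Set.mem_ofPred_eq] at *
    rw [add_mul, mul_add, ha, hb, add_zero]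
  smul_mem' := by
    intro c a ha
    simp only [Set.mem_ofPred_eq] at *
    rw [Matrix.smul_mul, Matrix.mul_smul, ha, smul_zero]

/-- The span of `Y * P + p' * V`. -/
def L1 (P p' : M2 A) : Submodule A (M2 A) where
  carrier := {Z | ∃ Y V : M2 A, Z = Y * P + p' * V}
  zero_mem' := ⟨0, 0, by simp⟩
  add_mem' := by
    rintro a b ⟨Y, V, rfl⟩ ⟨Y', V', rfl⟩
    exact ⟨Y + Y', V + V', by rw [add_mul, mul_add]; abel⟩
  smul_mem' := by
    rintro c a ⟨Y, V, rfl⟩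
    exact ⟨c • Y, c • V, by rw [Matrix.smul_mul, Matrix.mul_smul, smul_add]⟩

def K2 (q q' : M2 A) : Submodule A (M2 A × M2 A) where
  carrier := {Z | q' * Z.1 = Z.2 * q}
  zero_mem' := by simp
  add_mem' := by
    intro a b ha hb
    simp only [Set.mem_ofPred_eq] at *
    rw [Prod.fst_add, Prod.snd_add, add_mul, mul_add, ha, hb]
  smul_mem' := by
    intro c a ha
    simp only [Set.mem_ofPred_eq] at *
    rw [Prod.smul_fst, Prod.smul_snd, Matrix.smul_mul, Matrix.mul_smul, ha]

def adjL : M2 A →ₗ[A] M2 A where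
  toFun := Matrix.adjugate
  map_add' a b := by
    ext i j; fin_cases i <;> fin_cases j <;> simp [Matrix.adjugate_fin_two] <;> ring
  map_smul' c a := by
    ext i j; fin_cases i <;> fin_cases j <;> simp [Matrix.adjugate_fin_two]

lemma Good.right' (h : Good p p.adjugate) (Z : M2 A) (hZ : Z * p.adjugate = 0) :
    ∃ V, Z = V * p := by
  have h2 : Good p.adjugate p.adjugate.adjugate := by rw [adj_adj]; exact h.symm
  obtain ⟨V, hV⟩ := h2.right Z hZ
  exact ⟨V, by rw [hV, adj_adj]⟩

lemma adj_inj {Z W : M2 A} (h : Z.adjugate = W.adjugate) : Z = W := by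
  rw [← adj_adj Z, h, adj_adj]

lemma adj_add (Z W : M2 A) : (Z + W).adjugate = Z.adjugate + W.adjugate := adjL.map_add Z W

lemma adj_sm (c : A) (Z : M2 A) : (c • Z).adjugate = c • Z.adjugate := adjL.map_smul c Z

lemma main_odd (p p' : M2 A) (h : Good p p.adjugate) (h' : Good p' p'.adjugate) (i : ℕ)
    (hi : Odd i) :
    Nonempty ((((Ext A (ModuleCat A) i).obj
          (Opposite.op (ModuleCat.of A (Cok p)))).obj (ModuleCat.of A (Cok p'))) ≅
       (((Ext A (ModuleCat A) i).obj
          (Opposite.op (ModuleCat.of A (Cok p'.adjugate)))).obj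
            (ModuleCat.of A (Cok p.adjugate)))) := by
  have hpi : (ComplexShape.up ℕ).prev i + 1 = i := by
    obtain ⟨k, rfl⟩ := hi
    simp
  have key : ∀ Z : M2 A, p * (Z.adjugate * p') = 0 ↔ p'.adjugate * (Z * p.adjugate) = 0 := by
    intro Z
    have : (p * (Z.adjugate * p')).adjugate = p'.adjugate * (Z * p.adjugate) := by
      rw [Matrix.adjugate_mul_distrib, Matrix.adjugate_mul_distrib, adj_adj, mul_assoc]
    rw [← this]
    constructor
    · intro h; rw [h]; simp
    · intro h; apply adj_inj; rw [h]; simp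
  obtain ⟨e⟩ := ext_mat h h' i p p.adjugate (cx_d_odd _ _ _ hpi hi)
    (cx_d_even _ _ _ rfl hi.add_one) (K1 p.adjugate p'.adjugate) (Submodule.subtype _)
    ((L1 p p').comap (Submodule.subtype _)) (fun k => k.2) (fun Z hZ => ⟨⟨Z, hZ⟩, rfl⟩)
    (fun k => Iff.rfl)
  obtain ⟨e'⟩ := ext_mat h'.symm h.symm i p'.adjugate p' (cx_d_odd _ _ _ hpi hi)
    (cx_d_even _ _ _ rfl hi.add_one) (K1 p.adjugate p'.adjugate) (adjL ∘ₗ Submodule.subtype _)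
    ((L1 p p').comap (Submodule.subtype _)) (fun k => (key _).2 k.2)
    (fun Z hZ => ⟨⟨Z.adjugate, (key _).1 (by rwa [adj_adj])⟩, adj_adj _⟩)
    (fun k => by
      change (∃ Y V : M2 A, (k : M2 A) = Y * p + p' * V) ↔ ∃ Y V : M2 A,
        (k : M2 A).adjugate = Y * p'.adjugate + p.adjugate * V
      constructor
      · rintro ⟨Y, V, hk⟩
        refine ⟨V.adjugate, Y.adjugate, ?_⟩
        rw [hk, adj_add, Matrix.adjugate_mul_distrib, Matrix.adjugate_mul_distrib, add_comm]
      · rintro ⟨Y, V, hk⟩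
        refine ⟨V.adjugate, Y.adjugate, ?_⟩
        apply adj_inj
        rw [hk, adj_add, Matrix.adjugate_mul_distrib, Matrix.adjugate_mul_distrib, add_comm,
          adj_adj, adj_adj])
  exact ⟨e ≪≫ e'.symm⟩

lemma main_even (p p' : M2 A) (h : Good p p.adjugate) (h' : Good p' p'.adjugate) (i : ℕ)
    (hi : Even i) :
    Nonempty ((((Ext A (ModuleCat A) i).obj
          (Opposite.op (ModuleCat.of A (Cok p)))).obj (ModuleCat.of A (Cok p'))) ≅
       (((Ext A (ModuleCat A) i).obj
          (Opposite.op (ModuleCat.of A (Cok p'.adjugate)))).obj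
            (ModuleCat.of A (Cok p.adjugate)))) := by
  obtain ⟨c, hc⟩ : ∃ c : A, ∀ (p q : M2 A) (h : Good p q),
      (cx h).d i ((ComplexShape.up ℕ).prev i) = mm (c • q) := by
    cases i with
    | zero =>
      refine ⟨0, fun p q h => ?_⟩
      rw [HomologicalComplex.shape _ _ _ (by simp)]
      simp [mm]
      rfl
    | succ n =>
      refine ⟨1, fun p q h => ?_⟩
      rw [one_smul]
      exact cx_d_even _ _ _ (by simp) hi
  obtain ⟨e⟩ := ext_mat h h' i _ p (hc _ _ _)
    (cx_d_odd _ _ _ rfl hi.add_one) (K2 p.adjugate p'.adjugate)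
    (LinearMap.fst A _ _ ∘ₗ Submodule.subtype _)
    ((L1 (c • p.adjugate) p').comap (LinearMap.fst A _ _ ∘ₗ Submodule.subtype _))
    (by
      rintro ⟨⟨Z, Z'⟩, hZ⟩
      change p'.adjugate * Z = Z' * p.adjugate at hZ
      change p'.adjugate * (Z * p) = 0
      rw [← mul_assoc, hZ, mul_assoc, h.qp, mul_zero])
    (by
      intro Z hZ
      rw [← mul_assoc] at hZ
      obtain ⟨Z', hZ'⟩ := h.right _ hZ
      exact ⟨⟨(Z, Z'), hZ'⟩, rfl⟩)
    (fun k => Iff.rfl)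
  obtain ⟨e'⟩ := ext_mat h'.symm h.symm i _ p'.adjugate (hc _ _ _)
    (cx_d_odd _ _ _ rfl hi.add_one) (K2 p.adjugate p'.adjugate)
    (adjL ∘ₗ LinearMap.snd A _ _ ∘ₗ Submodule.subtype _)
    ((L1 (c • p.adjugate) p').comap (LinearMap.fst A _ _ ∘ₗ Submodule.subtype _))
    (by
      rintro ⟨⟨Z, Z'⟩, hZ⟩
      change p'.adjugate * Z = Z' * p.adjugate at hZ
      change p * (Z'.adjugate * p'.adjugate) = 0
      apply adj_inj
      rw [Matrix.adjugate_mul_distrib, Matrix.adjugate_mul_distrib, adj_adj, adj_adj, mul_assoc,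
        ← hZ, ← mul_assoc, h'.pq]
      simp)
    (by
      intro W hW
      have : p' * (W.adjugate * p.adjugate) = 0 := by
        rw [← mul_assoc, ← adj_adj p', ← Matrix.adjugate_mul_distrib,
          ← Matrix.adjugate_mul_distrib, hW]
        simp
      obtain ⟨Z, hZ⟩ := h'.left _ this
      exact ⟨⟨(Z, W.adjugate), hZ.symm⟩, adj_adj _⟩)
    (by
      rintro ⟨⟨Z, Z'⟩, hZ⟩
      change p'.adjugate * Z = Z' * p.adjugate at hZ
      change (∃ Y V : M2 A, Z = Y * (c • p.adjugate) + p' * V) ↔ ∃ Y V : M2 A,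
        Z'.adjugate = Y * (c • p') + p.adjugate * V
      constructor
      · rintro ⟨Y, V, rfl⟩
        have h1 : (Z' - c • (p'.adjugate * Y)) * p.adjugate = 0 := by
          rw [sub_mul, ← hZ, mul_add, ← mul_assoc _ p', h'.qp, zero_mul, add_zero,
            Matrix.mul_smul, Matrix.mul_smul, Matrix.smul_mul, mul_assoc, sub_self]
        obtain ⟨W, hW⟩ := h.right' _ h1
        refine ⟨Y.adjugate, W.adjugate, ?_⟩
        rw [sub_eq_iff_eq_add] at hW
        rw [hW, adj_add, adj_sm, Matrix.adjugate_mul_distrib, Matrix.adjugate_mul_distrib, adj_adj,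
          Matrix.mul_smul, add_comm]
      · rintro ⟨Y, W, hk⟩
        have hZ' : Z' = c • (p'.adjugate * Y.adjugate) + W.adjugate * p := by
          rw [← adj_adj Z', hk, adj_add, Matrix.mul_smul, adj_sm, Matrix.adjugate_mul_distrib,
            Matrix.adjugate_mul_distrib, adj_adj]
        have h1 : p'.adjugate * (Z - Y.adjugate * (c • p.adjugate)) = 0 := by
          rw [mul_sub, hZ, hZ', add_mul, mul_assoc _ p, h.pq, mul_zero, add_zero,
            Matrix.mul_smul, Matrix.mul_smul, Matrix.smul_mul, mul_assoc, sub_self]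
        obtain ⟨V, hV⟩ := h'.symm.left _ h1
        exact ⟨Y.adjugate, V, by rw [← hV]; abel⟩)
  exact ⟨e ≪≫ e'.symm⟩

theorem main_iso (p p' : M2 A) (h : Good p p.adjugate) (h' : Good p' p'.adjugate) (i : ℕ) :
    Nonempty ((((Ext A (ModuleCat A) i).obj
          (Opposite.op (ModuleCat.of A (Cok p)))).obj (ModuleCat.of A (Cok p'))) ≅
       (((Ext A (ModuleCat A) i).obj
          (Opposite.op (ModuleCat.of A (Cok p'.adjugate)))).obj
            (ModuleCat.of A (Cok p.adjugate)))) := by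
  rcases Nat.even_or_odd i with hi | hi
  · exact main_even p p' h h' i hi
  · exact main_odd p p' h h' i hi

lemma adj_gamma (x y a : A) : (gammaMat x y a).adjugate = etaMat x y a := by
  simp [gammaMat, etaMat, Matrix.adjugate_fin_two]

lemma adj_eta (x y a : A) : (etaMat x y a).adjugate = gammaMat x y a := by
  simp [gammaMat, etaMat, Matrix.adjugate_fin_two]

lemma good_gamma {x y : A} (hxy : IsExactZeroDivisorPair x y) (a : A) :
    Good (gammaMat x y a) (etaMat x y a) := by
  obtain ⟨-, -, hx, hy⟩ := hxy
  have h0 : x * y = 0 := (hy x).2 (Ideal.mem_span_singleton_self x)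
  have hx' : ∀ t, x * t = 0 → ∃ s, t = y * s := fun t ht =>
    Ideal.mem_span_singleton.1 ((hx t).1 (by rw [mul_comm]; exact ht))
  have hy' : ∀ t, y * t = 0 → ∃ s, t = x * s := fun t ht =>
    Ideal.mem_span_singleton.1 ((hy t).1 (by rw [mul_comm]; exact ht))
  have h0' : y * x = 0 := by rw [mul_comm]; exact h0
  refine ⟨?_, ?_, ?_, ?_⟩
  · ext i j; fin_cases i <;> fin_cases j <;> simp [gammaMat, etaMat, h0, h0'] <;> ring
  · ext i j; fin_cases i <;> fin_cases j <;> simp [gammaMat, etaMat, h0, h0'] <;> ring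
  · intro v hv
    have e0 : x * v 0 + a * v 1 = 0 := by
      simpa [gammaMat, Matrix.mulVec, dotProduct] using congrFun hv 0
    have e1 : y * v 1 = 0 := by
      simpa [gammaMat, Matrix.mulVec, dotProduct] using congrFun hv 1
    obtain ⟨s, hs⟩ := hy' _ e1
    obtain ⟨t, ht⟩ := hx' (v 0 + a * s) (by rw [hs] at e0; linear_combination e0)
    refine ⟨![t, s], ?_⟩
    ext i; fin_cases i
    · simp [etaMat, Matrix.mulVec, dotProduct]
      linear_combination -ht
    · simp [etaMat, Matrix.mulVec, dotProduct]
      exact hs.symm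
  · intro v hv
    have e0 : y * v 0 + -(a * v 1) = 0 := by
      simpa [etaMat, Matrix.mulVec, dotProduct] using congrFun hv 0
    have e1 : x * v 1 = 0 := by
      simpa [etaMat, Matrix.mulVec, dotProduct] using congrFun hv 1
    obtain ⟨s, hs⟩ := hx' _ e1
    obtain ⟨t, ht⟩ := hy' (v 0 - a * s) (by rw [hs] at e0; linear_combination e0)
    refine ⟨![t, s], ?_⟩
    ext i; fin_cases i
    · simp [gammaMat, Matrix.mulVec, dotProduct]
      linear_combination -ht
    · simp [gammaMat, Matrix.mulVec, dotProduct]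
      exact hs.symm

end aux


open CategoryTheory in
/-- **Corollary (3.5).** For an exact pair of zero divisors `x, y` and any
`a, b ∈ A` there are, for every `i`, isomorphisms of `A`-modules
`Ext_A^i(H_b, G_a) ≅ Ext_A^i(H_a, G_b)`, `Ext_A^i(G_a, H_b) ≅ Ext_A^i(G_b, H_a)`
and `Ext_A^i(G_a, G_b) ≅ Ext_A^i(H_b, H_a)`. -/
theorem ext_G_H_iso {A : Type u} [CommRing A] [IsNoetherianRing A]
    [IsLocalRing A] {x y : A} (hxy : IsExactZeroDivisorPair x y) (a b : A)
    (i : ℕ) :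
    Nonempty
      ((((Ext A (ModuleCat A) i).obj
          (Opposite.op (ModuleCat.of A (Hmod x y b)))).obj
            (ModuleCat.of A (Gmod x y a))) ≅
        (((Ext A (ModuleCat A) i).obj
          (Opposite.op (ModuleCat.of A (Hmod x y a)))).obj
            (ModuleCat.of A (Gmod x y b)))) ∧
    Nonempty
      ((((Ext A (ModuleCat A) i).obj
          (Opposite.op (ModuleCat.of A (Gmod x y a)))).obj
            (ModuleCat.of A (Hmod x y b))) ≅
        (((Ext A (ModuleCat A) i).obj
          (Opposite.op (ModuleCat.of A (Gmod x y b)))).obj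
            (ModuleCat.of A (Hmod x y a)))) ∧
    Nonempty
      ((((Ext A (ModuleCat A) i).obj
          (Opposite.op (ModuleCat.of A (Gmod x y a)))).obj
            (ModuleCat.of A (Gmod x y b))) ≅
        (((Ext A (ModuleCat A) i).obj
          (Opposite.op (ModuleCat.of A (Hmod x y b)))).obj
            (ModuleCat.of A (Hmod x y a)))) := by
  have g1 : ∀ c : A, Good (gammaMat x y c) (gammaMat x y c).adjugate := fun c => by
    rw [adj_gamma]; exact good_gamma hxy c
  have g2 : ∀ c : A, Good (etaMat x y c) (etaMat x y c).adjugate := fun c => by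
    rw [adj_eta]; exact (good_gamma hxy c).symm
  have h1 := main_iso _ _ (g2 b) (g1 a) i
  have h2 := main_iso _ _ (g1 a) (g2 b) i
  have h3 := main_iso _ _ (g1 a) (g1 b) i
  rw [adj_gamma, adj_eta] at h1 h2
  rw [adj_gamma, adj_gamma] at h3
  exact ⟨h1, h2, h3⟩
end
end

section
/- Let A be a commutative noetherian local ring, let x, y ∈ A be an exact pair of zero divisors, and let a ∈ A. (a) If multiplication by a on A/(y) is injective, then G_a is isomorphic as an A-module to the ideal (y, a) of A. (b) If multiplication by a on A/(x) is injective, then H_a is isomorphic as an A-module to the ideal (x, a) of A. -/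
/-!
Formalization of results from "Construction of totally reflexive modules
from an exact pair of zero divisors" by Henrik Holm.
-/

noncomputable section

theorem coker_aux {A : Type*} [CommRing A] (p q c : A) (I : Ideal A)
    (hI : ∀ z, z ∈ I ↔ ∃ u v, u * q + v * c = z)
    (hq : ∀ b : A, b * q = 0 ↔ b ∈ Ideal.span {p})
    (hc : ∀ v : A, c * v ∈ Ideal.span {q} → v ∈ Ideal.span {q})
    (M : Matrix (Fin 2) (Fin 2) A) (hM : M = !![p, -c; 0, q]) :
    Nonempty (((Fin 2 → A) ⧸ LinearMap.range (Matrix.toLin' M)) ≃ₗ[A] ↥I) := by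
  subst hM
  let f : (Fin 2 → A) →ₗ[A] A :=
    q • LinearMap.proj 0 + c • LinearMap.proj 1
  have hf : ∀ w, f w = q * w 0 + c * w 1 := fun w => by simp [f]
  have hpq : p * q = 0 := (hq p).2 (Ideal.mem_span_singleton_self p)
  have hr : LinearMap.range f = I := by
    ext z
    rw [hI, LinearMap.mem_range]
    constructor
    · rintro ⟨w, rfl⟩
      exact ⟨w 0, w 1, by rw [hf]; ring⟩
    · rintro ⟨u, v, rfl⟩
      exact ⟨![u, v], by rw [hf]; simp; ring⟩
  have hk : LinearMap.range (Matrix.toLin' !![p, -c; 0, q]) = LinearMap.ker f := by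
    ext w
    rw [LinearMap.mem_range, LinearMap.mem_ker, hf]
    constructor
    · rintro ⟨t, rfl⟩
      simp [Matrix.toLin'_apply, Matrix.mulVec, dotProduct, Fin.sum_univ_two]
      linear_combination t 0 * hpq
    · intro h
      have h1 : w 1 ∈ Ideal.span {q} := by
        apply hc
        rw [Ideal.mem_span_singleton]
        exact ⟨-w 0, by linear_combination h⟩
      obtain ⟨t, ht⟩ := Ideal.mem_span_singleton.1 h1
      have h2 : w 0 + c * t ∈ Ideal.span {p} := by
        rw [← hq]
        rw [ht] at h
        linear_combination h
      obtain ⟨s, hs⟩ := Ideal.mem_span_singleton.1 h2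
      refine ⟨![s, t], ?_⟩
      ext i
      fin_cases i
      · simp [Matrix.toLin'_apply, Matrix.mulVec, dotProduct, Fin.sum_univ_two]
        linear_combination -hs
      · simp [Matrix.toLin'_apply, Matrix.mulVec, dotProduct, Fin.sum_univ_two]
        exact ht.symm
  exact ⟨(Submodule.quotEquivOfEq _ _ hk).trans
    (f.quotKerEquivRange.trans (LinearEquiv.ofEq _ _ hr))⟩

theorem reg_aux {A : Type*} [CommRing A] (q a : A)
    (h : Function.Injective fun m : A ⧸ Ideal.span ({q} : Set A) => a • m) (v : A)
    (hv : a * v ∈ Ideal.span {q}) : v ∈ Ideal.span {q} := by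
  rw [← Ideal.Quotient.eq_zero_iff_mem] at hv ⊢
  apply h
  simp only [smul_zero]
  rw [← hv]
  rfl

/-- **Proposition (3.7).** For an exact pair of zero divisors `x, y` and
`a ∈ A`: (a) if multiplication by `a` on `A/(y)` is injective then
`G_a ≅ (y, a)`; (b) if multiplication by `a` on `A/(x)` is injective then
`H_a ≅ (x, a)`. -/
theorem G_H_iso_ideal {A : Type*} [CommRing A] [IsNoetherianRing A]
    [IsLocalRing A] {x y : A} (hxy : IsExactZeroDivisorPair x y) (a : A) :
    ((Function.Injective fun m : A ⧸ Ideal.span ({y} : Set A) => a • m) →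
      Nonempty (Gmod x y a ≃ₗ[A] ↥(Ideal.span ({y, a} : Set A)))) ∧
    ((Function.Injective fun m : A ⧸ Ideal.span ({x} : Set A) => a • m) →
      Nonempty (Hmod x y a ≃ₗ[A] ↥(Ideal.span ({x, a} : Set A)))) := by
  obtain ⟨-, -, hx, hy⟩ := hxy
  refine ⟨fun h => ?_, fun h => ?_⟩
  · refine coker_aux x y (-a) _ (fun z => ?_) hy (fun v hv => reg_aux y a h v ?_) _ ?_
    · rw [Ideal.mem_span_pair]
      constructor
      · rintro ⟨u, v, rfl⟩
        exact ⟨u, -v, by ring⟩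
      · rintro ⟨u, v, rfl⟩
        exact ⟨u, -v, by ring⟩
    · rw [neg_mul] at hv
      exact (Ideal.neg_mem_iff _).1 hv
    · simp [gammaMat]
  · exact coker_aux y x a _ (fun z => Ideal.mem_span_pair) hx (reg_aux x a h) _ rfl
end
end

section
/- Let A be a commutative noetherian local ring, let x, y ∈ A be an exact pair of zero divisors, and let a ∈ A. If a is not a unit in A, then neither G_a nor H_a is a free A-module; in fact, both G_a and H_a have infinite projective dimension. -/
/-!
Formalization of results from "Construction of totally reflexive modules
from an exact pair of zero divisors" by Henrik Holm.
-/

noncomputable section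

universe u

section aux
open CategoryTheory
variable {A : Type u} [CommRing A]

/-- periodic complex -/
def perCx {F : Type u} [AddCommGroup F] [Module A F] (f g : F →ₗ[A] F)
    (hfg : LinearMap.range f = LinearMap.ker g) (hgf : LinearMap.range g = LinearMap.ker f) :
    ChainComplex (ModuleCat.{u} A) ℕ :=
  HomologicalComplex.alternatingConst (ModuleCat.of A F)
    (φ := ModuleCat.ofHom g) (ψ := ModuleCat.ofHom f)
    (by rw [← ModuleCat.ofHom_comp, LinearMap.range_le_ker_iff.1 hgf.le]; rfl)
    (by rw [← ModuleCat.ofHom_comp, LinearMap.range_le_ker_iff.1 hfg.le]; rfl)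
    fun _ _ => ComplexShape.down_nat_odd_add

variable {F : Type u} [AddCommGroup F] [Module A F] (f g : F →ₗ[A] F)
    (hfg : LinearMap.range f = LinearMap.ker g) (hgf : LinearMap.range g = LinearMap.ker f)

lemma perCx_d_odd (m : ℕ) (hm : Odd (m + 1)) :
    (perCx f g hfg hgf).d (m + 1) m = ModuleCat.ofHom f := by
  have h : ¬ Even (m + 1) := Nat.not_even_iff_odd.2 hm
  have h2 : (ComplexShape.down ℕ).Rel (m + 1) m := rfl
  exact (dif_pos h2).trans (dif_neg h)

lemma perCx_d_even (m : ℕ) (h : Even (m + 1)) :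
    (perCx f g hfg hgf).d (m + 1) m = ModuleCat.ofHom g := by
  have h2 : (ComplexShape.down ℕ).Rel (m + 1) m := rfl
  exact (dif_pos h2).trans (dif_pos h)

/-- augmentation -/
def perπ : perCx f g hfg hgf ⟶
    (ChainComplex.single₀ (ModuleCat.{u} A)).obj (ModuleCat.of A (F ⧸ LinearMap.range f)) :=
  ((perCx f g hfg hgf).toSingle₀Equiv _).symm
    ⟨(ModuleCat.ofHom (LinearMap.range f).mkQ : ModuleCat.of A F ⟶ _), by
      rw [perCx_d_odd f g hfg hgf 0 (by decide)]
      erw [← ModuleCat.ofHom_comp]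
      rw [LinearMap.range_mkQ_comp]; rfl⟩

lemma perπ_f_zero : (perπ f g hfg hgf).f 0 = ModuleCat.ofHom (LinearMap.range f).mkQ :=
  ChainComplex.toSingle₀Equiv_symm_apply_f_zero _ _

lemma perπ_quasiIso : QuasiIso (perπ f g hfg hgf) where
  quasiIsoAt m := by
    induction m with
    | zero =>
      rw [ChainComplex.quasiIsoAt₀_iff, ShortComplex.quasiIso_iff_of_zeros' _ rfl rfl rfl]
      constructor
      · rw [ShortComplex.moduleCat_exact_iff_range_eq_ker]
        change LinearMap.range ((perCx f g hfg hgf).d 1 0).hom =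
          LinearMap.ker ((perπ f g hfg hgf).f 0).hom
        rw [perπ_f_zero, perCx_d_odd f g hfg hgf 0 (by decide)]
        exact (Submodule.ker_mkQ _).symm
      · change Epi ((perπ f g hfg hgf).f 0)
        rw [perπ_f_zero]
        exact (ModuleCat.epi_iff_surjective _).2 (Submodule.mkQ_surjective _)
    | succ m _ =>
      rw [quasiIsoAt_iff_exactAt' (hL := ChainComplex.exactAt_succ_single_obj ..),
          HomologicalComplex.exactAt_iff' _ (m + 2) (m + 1) m (by simp) (by simp)]
      rw [ShortComplex.moduleCat_exact_iff_range_eq_ker]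
      change LinearMap.range ((perCx f g hfg hgf).d (m+2) (m+1)).hom =
          LinearMap.ker ((perCx f g hfg hgf).d (m+1) m).hom
      by_cases hm : Odd (m + 1)
      · rw [perCx_d_odd _ _ _ _ _ hm, perCx_d_even _ _ _ _ (m+1) hm.add_one]
        exact hgf
      · rw [Nat.not_odd_iff_even] at hm
        rw [perCx_d_even _ _ _ _ _ hm, perCx_d_odd _ _ _ _ (m+1) hm.add_one]
        exact hfg

/-- resolution -/
def perRes [Module.Projective A F] :
    ProjectiveResolution (ModuleCat.of A (F ⧸ LinearMap.range f)) where
  complex := perCx f g hfg hgf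
  projective _ := (IsProjective.iff_projective F).1 inferInstance
  π := perπ f g hfg hgf
  quasiIso := perπ_quasiIso f g hfg hgf

lemma ext_nontrivial {F : Type u} [AddCommGroup F] [Module A F] (f g : F →ₗ[A] F)
    (hfg : LinearMap.range f = LinearMap.ker g) (hgf : LinearMap.range g = LinearMap.ker f)
    [Module.Projective A F] (N : ModuleCat.{u} A) (t : F →ₗ[A] N) (ht : t ≠ 0)
    (hf : ∀ s : F →ₗ[A] N, s ∘ₗ f = 0) (hg : ∀ s : F →ₗ[A] N, s ∘ₗ g = 0) (n : ℕ) :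
    Nontrivial (((Ext A (ModuleCat.{u} A) n).obj
        (Opposite.op (ModuleCat.of A (F ⧸ LinearMap.range f)))).obj N) := by
  by_contra hn
  rw [not_nontrivial_iff_subsingleton] at hn
  have hz := ModuleCat.isZero_of_subsingleton (((Ext A (ModuleCat.{u} A) n).obj
        (Opposite.op (ModuleCat.of A (F ⧸ LinearMap.range f)))).obj N)
  have hz2 := hz.of_iso ((perRes f g hfg hgf).isoExt (R := A) n N).symm
  have hd : ∀ i j (s : (perCx f g hfg hgf).X i ⟶ N), (perCx f g hfg hgf).d j i ≫ s = 0 := by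
    intro i j s
    by_cases hij : (ComplexShape.down ℕ).Rel j i
    · obtain rfl : i + 1 = j := hij
      by_cases hm : Odd (i + 1)
      · rw [perCx_d_odd _ _ _ _ _ hm]
        exact ModuleCat.hom_ext (hf s.hom)
      · rw [Nat.not_odd_iff_even] at hm
        rw [perCx_d_even _ _ _ _ _ hm]
        exact ModuleCat.hom_ext (hg s.hom)
    · rw [(perCx f g hfg hgf).shape _ _ hij, Limits.zero_comp]
  rw [← HomologicalComplex.exactAt_iff_isZero_homology, HomologicalComplex.exactAt_iff,
    ShortComplex.moduleCat_exact_iff] at hz2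
  obtain ⟨s, hs⟩ := hz2 (ModuleCat.ofHom t : ModuleCat.of A F ⟶ N) (hd n _ _)
  have h0 : (ModuleCat.ofHom t : ModuleCat.of A F ⟶ N) = 0 := hs.symm.trans (hd _ _ s)
  exact ht (congrArg ModuleCat.Hom.hom h0)

lemma not_free_of_ext (M : Type u) [AddCommGroup M] [Module A M]
    (h : ∀ n : ℕ, ∃ N : ModuleCat.{u} A, Nontrivial
      (((Ext A (ModuleCat A) n).obj (Opposite.op (ModuleCat.of A M))).obj N)) :
    ¬ Module.Free A M := by
  intro hM
  obtain ⟨N, hN⟩ := h 1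
  have : Projective (ModuleCat.of A M) := (IsProjective.iff_projective M).1 inferInstance
  have := ModuleCat.subsingleton_of_isZero
    (isZero_Ext_succ_of_projective (R := A) (ModuleCat.of A M) N 0)
  exact not_subsingleton _ this

lemma range_eq_ker_tri {x y : A} (hxy : IsExactZeroDivisorPair x y) (a : A) :
    LinearMap.range (Matrix.toLin' !![x, a; 0, y]) =
      LinearMap.ker (Matrix.toLin' !![y, -a; 0, x]) := by
  obtain ⟨-, -, hx, hy⟩ := hxy
  have hxy0 : x * y = 0 := (hy x).2 (Ideal.mem_span_singleton_self x)
  apply le_antisymm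
  · rintro _ ⟨v, rfl⟩
    rw [LinearMap.mem_ker]
    ext i
    fin_cases i
    · simp [Matrix.mulVec, dotProduct, Fin.sum_univ_two]
      linear_combination v 0 * hxy0
    · simp [Matrix.mulVec, dotProduct, Fin.sum_univ_two]
      linear_combination v 1 * hxy0
  · intro v hv
    rw [LinearMap.mem_ker] at hv
    have h0 := congrFun hv 0
    have h1 := congrFun hv 1
    simp [Matrix.mulVec, dotProduct, Fin.sum_univ_two] at h0 h1
    obtain ⟨w, hw⟩ := Ideal.mem_span_singleton'.1 ((hx (v 1)).1 (by linear_combination h1))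
    obtain ⟨t, ht⟩ := Ideal.mem_span_singleton'.1 ((hy (v 0 - a * w)).1
      (by linear_combination h0 - a * hw))
    refine ⟨![t, w], ?_⟩
    ext i
    fin_cases i
    · simp [Matrix.mulVec, dotProduct, Fin.sum_univ_two]
      linear_combination ht
    · simp [Matrix.mulVec, dotProduct, Fin.sum_univ_two]
      linear_combination hw

lemma comp_tri_zero [IsLocalRing A] {x y a : A} (hx : ¬ IsUnit x) (hy : ¬ IsUnit y)
    (ha : ¬ IsUnit a) (s : (Fin 2 → A) →ₗ[A] IsLocalRing.ResidueField A) :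
    s ∘ₗ Matrix.toLin' !![x, a; 0, y] = 0 := by
  have key : ∀ (b : A), ¬ IsUnit b → ∀ v, s (b • v) = 0 := by
    intro b hb v
    rw [map_smul, Algebra.smul_def]
    have : algebraMap A (IsLocalRing.ResidueField A) b = 0 :=
      (IsLocalRing.residue_eq_zero_iff b).2 hb
    rw [this, zero_mul]
  refine LinearMap.ext fun v => ?_
  have h : Matrix.toLin' !![x, a; 0, y] v =
      x • ![v 0, 0] + a • ![v 1, 0] + y • ![0, v 1] := by
    ext i
    fin_cases i <;> simp [Matrix.mulVec, dotProduct, Fin.sum_univ_two]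
  rw [LinearMap.comp_apply, h, map_add, map_add, key x hx, key a ha, key y hy]
  simp

lemma exists_ne_zero [IsLocalRing A] :
    ∃ t : (Fin 2 → A) →ₗ[A] IsLocalRing.ResidueField A, t ≠ 0 := by
  refine ⟨(Algebra.linearMap A _) ∘ₗ LinearMap.proj 0, fun h => ?_⟩
  have := LinearMap.congr_fun h ![1, 0]
  simp at this

lemma ext_coker [IsLocalRing A] (f g : (Fin 2 → A) →ₗ[A] (Fin 2 → A))
    (hfg : LinearMap.range f = LinearMap.ker g) (hgf : LinearMap.range g = LinearMap.ker f)
    (hf : ∀ s : (Fin 2 → A) →ₗ[A] IsLocalRing.ResidueField A, s ∘ₗ f = 0)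
    (hg : ∀ s : (Fin 2 → A) →ₗ[A] IsLocalRing.ResidueField A, s ∘ₗ g = 0) (n : ℕ) :
    ∃ N : ModuleCat.{u} A, Nontrivial (((Ext A (ModuleCat.{u} A) n).obj
        (Opposite.op (ModuleCat.of A ((Fin 2 → A) ⧸ LinearMap.range f)))).obj N) := by
  obtain ⟨t, ht⟩ := exists_ne_zero (A := A)
  exact ⟨ModuleCat.of A (IsLocalRing.ResidueField A),
    ext_nontrivial f g hfg hgf (ModuleCat.of A (IsLocalRing.ResidueField A)) t ht hf hg n⟩

end aux

open CategoryTheory in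
/-- **Corollary (3.8)(b).** For an exact pair of zero divisors `x, y` and a
non-unit `a ∈ A`, neither `G_a` nor `H_a` is free; in fact both have infinite
projective dimension (expressed here by the standard characterization: for
every `n` there is a module `N` with `Ext_A^n(-, N) ≠ 0`). -/
theorem G_H_not_free_of_not_isUnit {A : Type u} [CommRing A]
    [IsNoetherianRing A] [IsLocalRing A] {x y : A}
    (hxy : IsExactZeroDivisorPair x y) {a : A} (ha : ¬ IsUnit a) :
    ¬ Module.Free A (Gmod x y a) ∧ ¬ Module.Free A (Hmod x y a) ∧
    (∀ n : ℕ, ∃ N : ModuleCat.{u} A, Nontrivial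
      (((Ext A (ModuleCat A) n).obj
        (Opposite.op (ModuleCat.of A (Gmod x y a)))).obj N)) ∧
    (∀ n : ℕ, ∃ N : ModuleCat.{u} A, Nontrivial
      (((Ext A (ModuleCat A) n).obj
        (Opposite.op (ModuleCat.of A (Hmod x y a)))).obj N)) := by
  have hyx : IsExactZeroDivisorPair y x := ⟨hxy.2.1, hxy.1, hxy.2.2.2, hxy.2.2.1⟩
  have ha' : ¬ IsUnit (-a) := by rwa [IsUnit.neg_iff]
  have h1 : LinearMap.range (Matrix.toLin' (gammaMat x y a)) =
      LinearMap.ker (Matrix.toLin' (etaMat x y a)) := range_eq_ker_tri hxy a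
  have h2 : LinearMap.range (Matrix.toLin' (etaMat x y a)) =
      LinearMap.ker (Matrix.toLin' (gammaMat x y a)) := by
    have h := range_eq_ker_tri hyx (-a)
    rw [neg_neg] at h
    exact h
  have h3 : ∀ s : (Fin 2 → A) →ₗ[A] IsLocalRing.ResidueField A,
      s ∘ₗ Matrix.toLin' (gammaMat x y a) = 0 := comp_tri_zero hxy.1 hxy.2.1 ha
  have h4 : ∀ s : (Fin 2 → A) →ₗ[A] IsLocalRing.ResidueField A,
      s ∘ₗ Matrix.toLin' (etaMat x y a) = 0 := comp_tri_zero hxy.2.1 hxy.1 ha'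
  have hG := ext_coker _ _ h1 h2 h3 h4
  have hH := ext_coker _ _ h2 h1 h4 h3
  exact ⟨not_free_of_ext _ hG, not_free_of_ext _ hH, hG, hH⟩
end
end

section
/- Let A be a commutative noetherian local ring, let x, y ∈ A be an exact pair of zero divisors, and let a ∈ A. Then there is an isomorphism of A-algebras End_A(G_a)^op ≅ End_A(H_a). In particular, G_a is indecomposable if and only if H_a is indecomposable. -/
/-!
Formalization of results from "Construction of totally reflexive modules
from an exact pair of zero divisors" by Henrik Holm.
-/

noncomputable section

/-- An `A`-module is *indecomposable* if it is nonzero and is not the internal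
direct sum of two nonzero submodules. -/
def IsIndecomposableModule (A : Type*) [CommRing A] (M : Type*)
    [AddCommGroup M] [Module A M] : Prop :=
  (∃ m : M, m ≠ 0) ∧ ∀ N P : Submodule A M, IsCompl N P → N = ⊥ ∨ P = ⊥

theorem exists_algEquiv_of_pairing {A M N : Type*} [CommRing A] [AddCommGroup M] [Module A M]
    [AddCommGroup N] [Module A N] (p : M →ₗ[A] N →ₗ[A] A)
    (h1 : Function.Bijective p) (h2 : Function.Bijective p.flip) :
    Nonempty ((Module.End A M)ᵐᵒᵖ ≃ₐ[A] Module.End A N) := by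
  let F := LinearEquiv.ofBijective p h1
  let E := LinearEquiv.ofBijective p.flip h2
  let t : Module.End A M → Module.End A N := fun T =>
    E.symm.toLinearMap ∘ₗ (Module.Dual.transpose T) ∘ₗ E.toLinearMap
  let r : Module.End A N → Module.End A M := fun S =>
    F.symm.toLinearMap ∘ₗ (Module.Dual.transpose S) ∘ₗ F.toLinearMap
  have ht : ∀ T u v, p u (t T v) = p (T u) v := by
    intro T u v
    have : E (t T v) = Module.Dual.transpose T (E v) := by simp [t]
    exact congrArg (fun f => f u) this
  have hr : ∀ S u v, p (r S u) v = p u (S v) := by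
    intro S u v
    have : F (r S u) = Module.Dual.transpose S (F u) := by simp [r]
    exact congrArg (fun f => f v) this
  have extN : ∀ S S' : Module.End A N, (∀ u v, p u (S v) = p u (S' v)) → S = S' := by
    intro S S' h
    ext v
    apply h2.1
    ext u
    exact h u v
  have extM : ∀ S S' : Module.End A M, (∀ u v, p (S u) v = p (S' u) v) → S = S' := by
    intro S S' h
    ext v
    apply h1.1
    ext u
    exact h v u
  refine ⟨AlgEquiv.ofRingEquiv (f :=
    { toFun := fun T => t T.unop
      invFun := fun S => MulOpposite.op (r S)
      left_inv := ?_
      right_inv := ?_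
      map_mul' := ?_
      map_add' := ?_ }) ?_⟩
  · intro T
    apply MulOpposite.unop_injective
    apply extM
    intro u v
    simp [hr, ht]
  · intro S
    apply extN
    intro u v
    simp [hr, ht]
  · intro S T
    apply extN
    intro u v
    simp [ht]
  · intro S T
    apply extN
    intro u v
    simp [ht]
  · intro c
    apply extN
    intro u v
    simp [ht, MulOpposite.algebraMap_apply, Module.algebraMap_end_apply]

theorem indec_iff {A M : Type*} [CommRing A] [AddCommGroup M] [Module A M] :
    IsIndecomposableModule A M ↔ ((1 : Module.End A M) ≠ 0 ∧
      ∀ e : Module.End A M, e * e = e → e = 0 ∨ e = 1) := by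
  unfold IsIndecomposableModule
  refine and_congr ?_ ?_
  · constructor
    · rintro ⟨m, hm⟩ h
      exact hm (by simpa using congrArg (fun f => f m) h)
    · intro h
      by_contra! h'
      exact h (by ext m; simp [h' m])
  · constructor
    · intro h e he
      have hc := LinearMap.IsIdempotentElem.isCompl (f := e) he
      rcases h _ _ hc with h | h
      · left
        exact LinearMap.range_eq_bot.mp h
      · right
        have hi := LinearMap.ker_eq_bot.mp h
        ext m
        apply hi
        exact congrArg (fun f => f m) he
    · intro h N P hc
      have hk := Submodule.ker_projection hc
      have hra := Submodule.range_projection hc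
      rcases h (N.projection P hc) (Submodule.isIdempotentElem_projection hc) with h | h
      · left
        rw [← hra, h, LinearMap.range_zero]
      · right
        rw [← hk, h]
        exact LinearMap.ker_id

theorem indec_of_equiv {A M N : Type*} [CommRing A] [AddCommGroup M] [Module A M]
    [AddCommGroup N] [Module A N] (φ : (Module.End A M)ᵐᵒᵖ ≃ₐ[A] Module.End A N) :
    IsIndecomposableModule A M ↔ IsIndecomposableModule A N := by
  rw [indec_iff, indec_iff]
  constructor
  · rintro ⟨h0, h⟩
    refine ⟨fun h' => h0 ?_, fun e he => ?_⟩
    · apply MulOpposite.op_injective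
      apply φ.injective
      simpa using h'
    · have := h (φ.symm e).unop (by rw [← MulOpposite.unop_mul, ← map_mul, he])
      simpa using this
  · rintro ⟨h0, h⟩
    refine ⟨fun h' => h0 ?_, fun e he => ?_⟩
    · rw [← map_one φ, ← MulOpposite.op_one, h']
      simp
    · have := h (φ (MulOpposite.op e)) (by rw [← map_mul, ← MulOpposite.op_mul, he])
      simpa using this

theorem mem_range_gamma {A : Type*} [CommRing A] (x y a : A) (u : Fin 2 → A) :
    u ∈ LinearMap.range (Matrix.toLin' (gammaMat x y a)) ↔
      ∃ s t, u 0 = x * s + a * t ∧ u 1 = y * t := by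
  constructor
  · rintro ⟨w, rfl⟩
    exact ⟨w 0, w 1, by simp [gammaMat, Matrix.mulVec, dotProduct, Fin.sum_univ_two]⟩
  · rintro ⟨s, t, h0, h1⟩
    refine ⟨![s, t], ?_⟩
    ext i
    fin_cases i <;> simp [gammaMat, h0, h1, Matrix.mulVec, dotProduct, Fin.sum_univ_two]

theorem mem_range_eta {A : Type*} [CommRing A] (x y a : A) (u : Fin 2 → A) :
    u ∈ LinearMap.range (Matrix.toLin' (etaMat x y a)) ↔
      ∃ s t, u 0 = y * s - a * t ∧ u 1 = x * t := by
  constructor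
  · rintro ⟨w, rfl⟩
    exact ⟨w 0, w 1, by
      simp [etaMat, Matrix.mulVec, dotProduct, Fin.sum_univ_two, sub_eq_add_neg]⟩
  · rintro ⟨s, t, h0, h1⟩
    refine ⟨![s, t], ?_⟩
    ext i
    fin_cases i <;>
      simp [etaMat, h0, h1, Matrix.mulVec, dotProduct, Fin.sum_univ_two, sub_eq_add_neg]

def prePair {A : Type*} [CommRing A] (x y a : A) : (Fin 2 → A) →ₗ[A] (Fin 2 → A) →ₗ[A] A :=
  LinearMap.mk₂ A (fun u v => v 0 * x * u 1 - v 1 * y * u 0 + v 1 * a * u 1)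
    (by intros; simp; ring) (by intros; simp; ring) (by intros; simp; ring)
    (by intros; simp; ring)

theorem prePair_apply {A : Type*} [CommRing A] (x y a : A) (u v : Fin 2 → A) :
    prePair x y a u v = v 0 * x * u 1 - v 1 * y * u 0 + v 1 * a * u 1 := rfl

theorem exists_pairing {A : Type*} [CommRing A] {x y : A} (hxy : x * y = 0) (a : A) :
    ∃ p : Gmod x y a →ₗ[A] Hmod x y a →ₗ[A] A, ∀ u v : Fin 2 → A,
      p (Submodule.Quotient.mk u) (Submodule.Quotient.mk v) =
        v 0 * x * u 1 - v 1 * y * u 0 + v 1 * a * u 1 := by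
  let q : (Fin 2 → A) →ₗ[A] Hmod x y a →ₗ[A] A :=
    (Submodule.liftQ _ (prePair x y a).flip (by
      intro v hv
      obtain ⟨s, t, h0, h1⟩ := (mem_range_eta x y a v).1 hv
      rw [LinearMap.mem_ker]
      refine LinearMap.ext fun u => ?_
      rw [LinearMap.flip_apply, prePair_apply, h0, h1, LinearMap.zero_apply]
      linear_combination (s * u 1 - t * u 0) * hxy)).flip
  refine ⟨Submodule.liftQ _ q ?_, fun u v => rfl⟩
  intro u hu
  obtain ⟨s, t, h0, h1⟩ := (mem_range_gamma x y a u).1 hu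
  rw [LinearMap.mem_ker]
  refine LinearMap.ext fun v => ?_
  obtain ⟨v, rfl⟩ := Submodule.Quotient.mk_surjective _ v
  change v 0 * x * u 1 - v 1 * y * u 0 + v 1 * a * u 1 = 0
  rw [h0, h1]
  linear_combination (v 0 * t - v 1 * s) * hxy

theorem lin_fin2 {A : Type*} [CommRing A] (f : (Fin 2 → A) →ₗ[A] A) (u : Fin 2 → A) :
    f u = u 0 * f ![1, 0] + u 1 * f ![0, 1] := by
  have : u = u 0 • ![1, 0] + u 1 • ![0, 1] := by
    ext i
    fin_cases i <;> simp
  conv_lhs => rw [this]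
  rw [map_add, map_smul, map_smul, smul_eq_mul, smul_eq_mul]

theorem pairing_bij {A : Type*} [CommRing A] {x y : A} (h : IsExactZeroDivisorPair x y) (a : A)
    (p : Gmod x y a →ₗ[A] Hmod x y a →ₗ[A] A)
    (hp : ∀ u v : Fin 2 → A, p (Submodule.Quotient.mk u) (Submodule.Quotient.mk v) =
        v 0 * x * u 1 - v 1 * y * u 0 + v 1 * a * u 1) :
    Function.Bijective p ∧ Function.Bijective p.flip := by
  obtain ⟨-, -, hx, hy⟩ := h
  have hx' : ∀ b : A, b * x = 0 → ∃ c, b = y * c := fun b hb =>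
    Ideal.mem_span_singleton.1 ((hx b).1 hb)
  have hy' : ∀ b : A, b * y = 0 → ∃ c, b = x * c := fun b hb =>
    Ideal.mem_span_singleton.1 ((hy b).1 hb)
  refine ⟨⟨?_, ?_⟩, ⟨?_, ?_⟩⟩
  · rw [injective_iff_map_eq_zero]
    intro u hu
    obtain ⟨u, rfl⟩ := Submodule.Quotient.mk_surjective _ u
    have e0 := hp u ![1, 0]
    have e1 := hp u ![0, 1]
    rw [hu] at e0 e1
    simp at e0 e1
    obtain ⟨t, ht⟩ := hx' (u 1) (by linear_combination -e0)
    obtain ⟨s, hs⟩ := hy' (u 0 - a * t) (by linear_combination e1 + a * ht)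
    rw [Submodule.Quotient.mk_eq_zero, mem_range_gamma]
    exact ⟨s, t, by linear_combination hs, ht⟩
  · intro f
    let g : (Fin 2 → A) →ₗ[A] A := f ∘ₗ Submodule.mkQ _
    have hg : ∀ s t : A, g ![y * s - a * t, x * t] = 0 := by
      intro s t
      have : (Submodule.Quotient.mk ![y * s - a * t, x * t] : Hmod x y a) = 0 := by
        rw [Submodule.Quotient.mk_eq_zero, mem_range_eta]
        exact ⟨s, t, rfl, rfl⟩
      change f (Submodule.Quotient.mk _) = 0
      rw [this, map_zero]
    have e0 := hg 1 0
    have e1 := hg 0 1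
    rw [lin_fin2] at e0 e1
    simp at e0 e1
    obtain ⟨c, hc⟩ := hy' (g ![1, 0]) (by linear_combination e0)
    obtain ⟨d, hd⟩ := hx' (g ![0, 1] - c * a) (by linear_combination e1 + a * hc)
    refine ⟨Submodule.Quotient.mk ![-d, c], LinearMap.ext fun v => ?_⟩
    obtain ⟨v, rfl⟩ := Submodule.Quotient.mk_surjective _ v
    rw [hp]
    change _ = g v
    rw [lin_fin2]
    simp
    linear_combination -v 0 * hc - v 1 * hd
  · rw [injective_iff_map_eq_zero]
    intro v hv
    obtain ⟨v, rfl⟩ := Submodule.Quotient.mk_surjective _ v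
    have e0 := hp ![1, 0] v
    have e1 := hp ![0, 1] v
    rw [← LinearMap.flip_apply, hv] at e0 e1
    simp at e0 e1
    obtain ⟨t, ht⟩ := hy' (v 1) (by linear_combination e0)
    obtain ⟨s, hs⟩ := hx' (v 0 + a * t) (by linear_combination -e1 - a * ht)
    rw [Submodule.Quotient.mk_eq_zero, mem_range_eta]
    exact ⟨s, t, by linear_combination hs, ht⟩
  · intro f
    let g : (Fin 2 → A) →ₗ[A] A := f ∘ₗ Submodule.mkQ _
    have hg : ∀ s t : A, g ![x * s + a * t, y * t] = 0 := by
      intro s t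
      have : (Submodule.Quotient.mk ![x * s + a * t, y * t] : Gmod x y a) = 0 := by
        rw [Submodule.Quotient.mk_eq_zero, mem_range_gamma]
        exact ⟨s, t, rfl, rfl⟩
      change f (Submodule.Quotient.mk _) = 0
      rw [this, map_zero]
    have e0 := hg 1 0
    have e1 := hg 0 1
    rw [lin_fin2] at e0 e1
    simp at e0 e1
    obtain ⟨c, hc⟩ := hx' (g ![1, 0]) (by linear_combination e0)
    obtain ⟨d, hd⟩ := hy' (g ![0, 1] + c * a) (by linear_combination e1 - a * hc)
    refine ⟨Submodule.Quotient.mk ![d, -c], LinearMap.ext fun u => ?_⟩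
    obtain ⟨u, rfl⟩ := Submodule.Quotient.mk_surjective _ u
    rw [LinearMap.flip_apply, hp]
    change _ = g u
    rw [lin_fin2]
    simp
    linear_combination -u 0 * hc - u 1 * hd

/-- **Corollary (4.3).** For an exact pair of zero divisors `x, y` and any
`a ∈ A`, there is an isomorphism of `A`-algebras
`End_A(G_a)^op ≅ End_A(H_a)`; in particular `G_a` is indecomposable if and
only if `H_a` is indecomposable. -/
theorem endOp_G_algEquiv_end_H {A : Type*} [CommRing A] [IsNoetherianRing A]
    [IsLocalRing A] {x y : A} (hxy : IsExactZeroDivisorPair x y) (a : A) :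
    Nonempty ((Module.End A (Gmod x y a))ᵐᵒᵖ ≃ₐ[A] Module.End A (Hmod x y a)) ∧
    (IsIndecomposableModule A (Gmod x y a) ↔
      IsIndecomposableModule A (Hmod x y a)) := by
  have h0 : x * y = 0 := (hxy.2.2.2 x).2 (Ideal.mem_span_singleton_self x)
  obtain ⟨p, hp⟩ := exists_pairing h0 a
  obtain ⟨b1, b2⟩ := pairing_bij hxy a p hp
  obtain ⟨φ⟩ := exists_algEquiv_of_pairing p b1 b2
  exact ⟨⟨φ⟩, indec_of_equiv φ⟩
end
end

section
/- Let A be a commutative noetherian local ring and let M be a finitely generated A-module. If A and Hom_A(M, M) are isomorphic as A-modules, then the canonical homomorphism of A-algebras χ : A → End_A(M), sending a to a · id_M, is an isomorphism. -/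
/-!
Formalization of results from "Construction of totally reflexive modules
from an exact pair of zero divisors" by Henrik Holm.
-/

noncomputable section

/-- **Lemma (4.4).** Let `M` be a finitely generated `A`-module. If `A` and
`Hom_A(M, M)` are isomorphic as `A`-modules, then the canonical `A`-algebra
homomorphism `χ : A → End_A(M)`, `χ(a) = a · id_M`, is an isomorphism. -/
theorem algebraMap_end_bijective {A : Type*} [CommRing A] [IsNoetherianRing A]
    [IsLocalRing A] (M : Type*) [AddCommGroup M] [Module A M]
    [Module.Finite A M] (h : Nonempty (A ≃ₗ[A] (M →ₗ[A] M))) :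
    Function.Bijective (algebraMap A (Module.End A M)) := by
  obtain ⟨e⟩ := h
  have key : ∀ b : A, e b = b • e 1 := fun b => by
    rw [← map_smul, smul_eq_mul, mul_one]
  obtain ⟨a, ha⟩ := e.surjective LinearMap.id
  obtain ⟨c, hc⟩ := e.surjective (e 1 ∘ₗ e 1)
  have ha' : ∀ m : M, a • (e 1) m = m := fun m => by
    have := LinearMap.congr_fun ((key a).symm.trans ha) m
    simpa using this
  have hc' : ∀ m : M, c • (e 1) m = (e 1) ((e 1) m) := fun m => by
    have := LinearMap.congr_fun ((key c).symm.trans hc) m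
    simpa using this
  have h1 : ∀ m : M, (e 1) m = c • m := fun m => by
    rw [← ha' ((e 1) m), ← hc', smul_comm, ha']
  constructor
  · rw [injective_iff_map_eq_zero]
    intro b hb
    apply e.injective
    rw [map_zero, key]
    ext m
    have := LinearMap.congr_fun hb ((e 1) m)
    simpa [Module.algebraMap_end_apply] using this
  · intro f
    obtain ⟨b, hb⟩ := e.surjective f
    refine ⟨b * c, ?_⟩
    ext m
    rw [Module.algebraMap_end_apply, ← hb, key b, LinearMap.smul_apply, h1, mul_smul]
end
end

section
/- Let A be a commutative noetherian local ring and let x, y ∈ A be a regular exact pair of zero divisors. Let a, b ∈ A be elements such that (1) a or b is weakly regular on the A-module A/(x, y), and (2) a and b are not both units. Then the A-modules G_a and H_b are not isomorphic. -/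
/-!
Formalization of results from "Construction of totally reflexive modules
from an exact pair of zero divisors" by Henrik Holm.
-/

noncomputable section

theorem aux_mem {A : Type*} [CommRing A] (x y a : A) (z : Fin 2 → A) :
    z ∈ LinearMap.range (Matrix.toLin' (gammaMat x y a)) ↔
      ∃ t v, z 0 = x * t + a * v ∧ z 1 = y * v := by
  constructor
  · rintro ⟨w, rfl⟩
    refine ⟨w 0, w 1, ?_, ?_⟩ <;>
      simp [gammaMat, Matrix.toLin'_apply, Matrix.mulVec, dotProduct, Fin.sum_univ_two]
  · rintro ⟨t, v, h0, h1⟩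
    refine ⟨![t, v], ?_⟩
    ext i
    fin_cases i <;>
      simp [gammaMat, Matrix.toLin'_apply, Matrix.mulVec, dotProduct, Fin.sum_univ_two, h0, h1]

theorem aux_eta {A : Type*} [CommRing A] (x y b : A) : etaMat x y b = gammaMat y x (-b) := rfl

theorem aux_cyc {A : Type*} [CommRing A] (x y a : A) (ha : IsUnit a) :
    ∃ g : Gmod x y a, ∀ m, ∃ c : A, m = c • g := by
  obtain ⟨a', haa⟩ := ha.exists_right_inv
  refine ⟨Submodule.Quotient.mk ![0, 1], fun m => ?_⟩
  obtain ⟨z, rfl⟩ := Submodule.Quotient.mk_surjective _ m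
  refine ⟨z 1 - a' * y * z 0, ?_⟩
  rw [← Submodule.Quotient.mk_smul, Submodule.Quotient.eq, aux_mem]
  refine ⟨0, a' * z 0, ?_, ?_⟩
  · simp; linear_combination (-z 0) * haa
  · simp; ring

theorem aux_noncyc {A : Type*} [CommRing A] [IsLocalRing A] (x y a : A) (hx : ¬ IsUnit x)
    (hy : ¬ IsUnit y) (ha : ¬ IsUnit a) (h : ∃ g : Gmod x y a, ∀ m, ∃ c : A, m = c • g) :
    False := by
  obtain ⟨g, hg⟩ := h
  obtain ⟨z, rfl⟩ := Submodule.Quotient.mk_surjective _ g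
  obtain ⟨c, hc⟩ := hg (Submodule.Quotient.mk ![1, 0])
  obtain ⟨d, hd⟩ := hg (Submodule.Quotient.mk ![0, 1])
  rw [← Submodule.Quotient.mk_smul, Submodule.Quotient.eq, aux_mem] at hc hd
  obtain ⟨t, v, h1, h2⟩ := hc
  obtain ⟨t', v', h3, h4⟩ := hd
  simp at h1 h2 h3 h4
  have hx' := (IsLocalRing.residue_eq_zero_iff x).2 ((IsLocalRing.mem_maximalIdeal x).2 hx)
  have hy' := (IsLocalRing.residue_eq_zero_iff y).2 ((IsLocalRing.mem_maximalIdeal y).2 hy)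
  have ha' := (IsLocalRing.residue_eq_zero_iff a).2 ((IsLocalRing.mem_maximalIdeal a).2 ha)
  apply_fun IsLocalRing.residue A at h1 h2 h3 h4
  simp only [map_sub, map_add, map_mul, map_one, map_zero, map_neg, hx', hy', ha'] at h1 h2 h3 h4
  clear hg
  grind

theorem aux_reg {A : Type*} [CommRing A] (x y a r : A)
    (h : Function.Injective fun m : A ⧸ Ideal.span ({x, y} : Set A) => a • m)
    (hr : ∃ s t, a * r = s * x + t * y) : ∃ s t, s * x + t * y = r := by
  rw [← Ideal.mem_span_pair, ← Ideal.Quotient.eq_zero_iff_mem]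
  apply h
  obtain ⟨s, t, e⟩ := hr
  have : a * r ∈ Ideal.span ({x, y} : Set A) := Ideal.mem_span_pair.2 ⟨s, t, e.symm⟩
  simpa [Algebra.smul_def, ← map_mul] using Ideal.Quotient.eq_zero_iff_mem.2 this

/-- **Theorem (5.1).** Let `x, y` be a regular exact pair of zero divisors and
let `a, b ∈ A` be such that (1) `a` or `b` is weakly regular on `A/(x, y)` and
(2) `a` and `b` are not both units. Then `G_a` and `H_b` are not isomorphic. -/
theorem G_not_iso_H {A : Type*} [CommRing A] [IsNoetherianRing A]
    [IsLocalRing A] {x y : A} (hxy : IsExactZeroDivisorPair x y)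
    (hreg : Ideal.span ({x} : Set A) ⊓ Ideal.span ({y} : Set A) = ⊥) {a b : A}
    (hab : (Function.Injective
        fun m : A ⧸ Ideal.span ({x, y} : Set A) => a • m) ∨
      (Function.Injective
        fun m : A ⧸ Ideal.span ({x, y} : Set A) => b • m))
    (hu : ¬ (IsUnit a ∧ IsUnit b)) :
    IsEmpty (Gmod x y a ≃ₗ[A] Hmod x y b) := by
  constructor
  intro φ
  obtain ⟨hx, hy, hax, hay⟩ := hxy
  by_cases ha : IsUnit a
  · have hb : ¬ IsUnit (-b) := fun h => hu ⟨ha, (IsUnit.neg_iff b).1 h⟩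
    obtain ⟨g, hg⟩ := aux_cyc x y a ha
    have nc : (∃ g : Hmod x y b, ∀ m, ∃ c : A, m = c • g) → False :=
      aux_noncyc y x (-b) hy hx hb
    refine nc ⟨φ g, fun m => ?_⟩
    obtain ⟨c, hc⟩ := hg (φ.symm m)
    exact ⟨c, by rw [← φ.map_smul, ← hc]; exact (φ.apply_symm_apply m).symm⟩
  by_cases hb : IsUnit b
  · obtain ⟨g, hg⟩ : ∃ g : Hmod x y b, ∀ m, ∃ c : A, m = c • g := aux_cyc y x (-b) hb.neg
    refine aux_noncyc x y a hx hy ha ⟨φ.symm g, fun m => ?_⟩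
    obtain ⟨c, hc⟩ := hg (φ m)
    exact ⟨c, by rw [← φ.symm.map_smul, ← hc]; exact (φ.symm_apply_apply m).symm⟩
  obtain ⟨P, hP⟩ := Submodule.Quotient.mk_surjective _ (φ (Submodule.Quotient.mk ![1, 0]))
  obtain ⟨R, hR⟩ := Submodule.Quotient.mk_surjective _ (φ (Submodule.Quotient.mk ![0, 1]))
  have e1 : x • P ∈ LinearMap.range (Matrix.toLin' (etaMat x y b)) := by
    rw [← Submodule.Quotient.mk_eq_zero, Submodule.Quotient.mk_smul, hP, ← φ.map_smul,
      ← Submodule.Quotient.mk_smul, φ.map_eq_zero_iff, Submodule.Quotient.mk_eq_zero, aux_mem]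
    exact ⟨1, 0, by simp, by simp⟩
  have e2 : a • P + y • R ∈ LinearMap.range (Matrix.toLin' (etaMat x y b)) := by
    rw [← Submodule.Quotient.mk_eq_zero, Submodule.Quotient.mk_add, Submodule.Quotient.mk_smul,
      Submodule.Quotient.mk_smul, hP, hR, ← φ.map_smul, ← φ.map_smul, ← φ.map_add,
      ← Submodule.Quotient.mk_smul, ← Submodule.Quotient.mk_smul, ← Submodule.Quotient.mk_add,
      φ.map_eq_zero_iff, Submodule.Quotient.mk_eq_zero, aux_mem]
    exact ⟨0, 1, by simp, by simp⟩
  rw [aux_eta, aux_mem] at e1 e2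
  obtain ⟨t, v, h1, h2⟩ := e1
  obtain ⟨u, w, h3, h4⟩ := e2
  simp only [Pi.smul_apply, Pi.add_apply, smul_eq_mul] at h1 h2 h3 h4
  obtain ⟨c, hc⟩ := Ideal.mem_span_singleton'.1
    ((hax (v - P 1)).1 (by linear_combination -h2))
  have key : ∃ α β, α * x + β * y = v := by
    rcases hab with h | h
    · obtain ⟨α, β, e⟩ := aux_reg x y a (P 1) h ⟨w, -R 1, by linear_combination h4⟩
      exact ⟨α, β + c, by linear_combination e + hc⟩
    · exact aux_reg x y b v h ⟨-P 0, t, by linear_combination h1⟩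
  obtain ⟨α, β, e⟩ := key
  have hz : (P 0 + b * α) * x = 0 := by
    rw [← Ideal.mem_bot, ← hreg]
    refine ⟨Ideal.mem_span_singleton'.2 ⟨_, rfl⟩, Ideal.mem_span_singleton'.2 ⟨t - b * β, ?_⟩⟩
    linear_combination -h1 - b * e
  obtain ⟨d, hd⟩ := Ideal.mem_span_singleton'.1 ((hax _).1 hz)
  have res : ∀ r : A, ¬ IsUnit r → IsLocalRing.residue A r = 0 := fun r hr =>
    (IsLocalRing.residue_eq_zero_iff r).2 ((IsLocalRing.mem_maximalIdeal r).2 hr)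
  have rx := res x hx
  have ry := res y hy
  have ra := res a ha
  have rb := res b hb
  have p0 : IsLocalRing.residue A (P 0) = 0 := by
    have := congrArg (IsLocalRing.residue A) hd
    simpa [rx, ry, ra, rb] using this.symm
  have p1 : IsLocalRing.residue A (P 1) = 0 := by
    have : P 1 = α * x + β * y - c * y := by linear_combination hc - e
    rw [this]; simp [rx, ry]
  obtain ⟨W, hW⟩ := Submodule.Quotient.mk_surjective _
    (φ.symm (Submodule.Quotient.mk ![1, 0]))
  obtain ⟨Z, hZ⟩ := Submodule.Quotient.mk_surjective _
    (φ.symm (Submodule.Quotient.mk ![0, 1]))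
  have e3 : ![1, 0] - (P 0 • W + P 1 • Z) ∈
      LinearMap.range (Matrix.toLin' (gammaMat x y a)) := by
    rw [← Submodule.Quotient.eq, Submodule.Quotient.mk_add, Submodule.Quotient.mk_smul,
      Submodule.Quotient.mk_smul, hW, hZ]
    apply φ.injective
    rw [← hP, φ.map_add, φ.map_smul, φ.map_smul, φ.apply_symm_apply, φ.apply_symm_apply,
      ← Submodule.Quotient.mk_smul, ← Submodule.Quotient.mk_smul, ← Submodule.Quotient.mk_add]
    congr 1
    ext i
    fin_cases i <;> simp
  rw [aux_mem] at e3
  obtain ⟨k, l, h5, -⟩ := e3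
  have := congrArg (IsLocalRing.residue A) h5
  simp [rx, ra, p0, p1] at this
end
end

section
/- Let A be a commutative noetherian local ring and let x, y ∈ A be a regular exact pair of zero divisors. Let a ∈ A be weakly regular on the A-module A/(x, y), and let b ∈ A be a non-unit. Then (a) the A-modules G_a and G_{ab} are not isomorphic, and (b) the A-modules H_a and H_{ab} are not isomorphic. -/
/-!
Formalization of results from "Construction of totally reflexive modules
from an exact pair of zero divisors" by Henrik Holm.
-/

noncomputable section

lemma aux_entries {A : Type*} [CommRing A] (M N : Matrix (Fin 2) (Fin 2) A) (J : Ideal A)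
    (hN : ∀ i j, N i j ∈ J)
    (f : ((Fin 2 → A) ⧸ LinearMap.range (Matrix.toLin' M)) ≃ₗ[A]
      ((Fin 2 → A) ⧸ LinearMap.range (Matrix.toLin' N))) (i j : Fin 2) : M i j ∈ J := by
  obtain ⟨p, hp⟩ := Module.projective_lifting_property
    (LinearMap.range (Matrix.toLin' N)).mkQ
    (f.toLinearMap ∘ₗ (LinearMap.range (Matrix.toLin' M)).mkQ) (Submodule.mkQ_surjective _)
  obtain ⟨q, hq⟩ := Module.projective_lifting_property
    (LinearMap.range (Matrix.toLin' M)).mkQ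
    (f.symm.toLinearMap ∘ₗ (LinearMap.range (Matrix.toLin' N)).mkQ) (Submodule.mkQ_surjective _)
  have hr : ∀ v ∈ LinearMap.range (Matrix.toLin' N), ∀ i, v i ∈ J := by
    rintro _ ⟨w, rfl⟩ i
    rw [Matrix.toLin'_apply, Matrix.mulVec_eq_sum, Finset.sum_apply]
    exact J.sum_mem fun k _ => J.mul_mem_right (w k) (hN i k)
  have h1 : ∀ v i, p (q v) i - v i ∈ J := by
    intro v i
    refine hr (p (q v) - v) ?_ i
    rw [← Submodule.ker_mkQ (LinearMap.range (Matrix.toLin' N)), LinearMap.mem_ker, map_sub]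
    have e1 := LinearMap.congr_fun hp (q v)
    have e2 := LinearMap.congr_fun hq v
    simp only [LinearMap.comp_apply, LinearEquiv.coe_coe] at e1 e2
    rw [e1, e2, LinearEquiv.apply_symm_apply, sub_self]
  have h2 : ∀ v i, p (Matrix.toLin' M v) i ∈ J := by
    intro v i
    refine hr _ ?_ i
    rw [← Submodule.ker_mkQ (LinearMap.range (Matrix.toLin' N)), LinearMap.mem_ker]
    have e1 := LinearMap.congr_fun hp (Matrix.toLin' M v)
    simp only [LinearMap.comp_apply, LinearEquiv.coe_coe] at e1
    rw [e1]
    have : (LinearMap.range (Matrix.toLin' M)).mkQ (Matrix.toLin' M v) = 0 := by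
      rw [← LinearMap.mem_ker, Submodule.ker_mkQ]
      exact ⟨v, rfl⟩
    rw [this, map_zero]
  let π := (Ideal.Quotient.mk J).mapMatrix (m := Fin 2)
  have h3 : π (LinearMap.toMatrix' p) * π (LinearMap.toMatrix' q) = 1 := by
    rw [← map_mul, ← LinearMap.toMatrix'_comp, ← map_one π, ← LinearMap.toMatrix'_id]
    ext i j
    simp only [π, RingHom.mapMatrix_apply, Matrix.map_apply, LinearMap.toMatrix'_apply]
    rw [Ideal.Quotient.eq]
    exact h1 _ _
  have h4 : π (LinearMap.toMatrix' p) * π M = 0 := by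
    rw [← map_mul, ← LinearMap.toMatrix'_toLin' M, ← LinearMap.toMatrix'_comp]
    ext i j
    simp only [π, RingHom.mapMatrix_apply, Matrix.map_apply, LinearMap.toMatrix'_apply]
    rw [Matrix.zero_apply, Ideal.Quotient.eq_zero_iff_mem]
    exact h2 _ _
  have h5 : π M = 0 := by
    rw [← one_mul (π M), ← mul_eq_one_comm.mp h3, mul_assoc, h4, mul_zero]
  have h6 := congrFun (congrFun h5 i) j
  exact Ideal.Quotient.eq_zero_iff_mem.mp h6

lemma aux_not_mem {A : Type*} [CommRing A] [IsLocalRing A] {x y : A}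
    (hx : ¬ IsUnit x) (hy : ¬ IsUnit y) {a b : A}
    (ha : Function.Injective
      fun m : A ⧸ Ideal.span ({x, y} : Set A) => a • m)
    (hb : ¬ IsUnit b) : a ∉ Ideal.span ({x, y} : Set A) ⊔ Ideal.span {a * b} := by
  intro h
  obtain ⟨u, hu, v, hv, huv⟩ := Submodule.mem_sup.mp h
  obtain ⟨t, rfl⟩ := Ideal.mem_span_singleton'.mp hv
  have hI : Ideal.span ({x, y} : Set A) ≤ IsLocalRing.maximalIdeal A := by
    rw [Ideal.span_le]
    rintro z (rfl | rfl)
    · exact hx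
    · exact hy
  have h1 : IsUnit (1 - t * b) := by
    by_contra hn
    have m1 : (1 - t * b) ∈ IsLocalRing.maximalIdeal A := hn
    have m2 : t * b ∈ IsLocalRing.maximalIdeal A := Ideal.mul_mem_left _ _ hb
    have m3 := Ideal.add_mem _ m1 m2
    rw [sub_add_cancel] at m3
    exact m3 isUnit_one
  have h2 : a ∈ Ideal.span ({x, y} : Set A) := by
    rw [← Ideal.mul_unit_mem_iff_mem _ h1]
    have : a * (1 - t * b) = u := by linear_combination -huv
    rwa [this]
  have h3 : (1 : A ⧸ Ideal.span ({x, y} : Set A)) = 0 := by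
    apply ha
    change a • (1 : A ⧸ Ideal.span ({x, y} : Set A)) = a • 0
    rw [smul_zero, Algebra.smul_def, mul_one]
    exact Ideal.Quotient.eq_zero_iff_mem.mpr h2
  have h4 : (1 : A) ∈ Ideal.span ({x, y} : Set A) :=
    Ideal.Quotient.eq_zero_iff_mem.mp (by simpa using h3)
  exact hI h4 isUnit_one

/-- **Theorem (5.2).** Let `x, y` be a regular exact pair of zero divisors,
let `a ∈ A` be weakly regular on `A/(x, y)` and let `b ∈ A` be a non-unit.
Then (a) `G_a ≇ G_{ab}` and (b) `H_a ≇ H_{ab}`. -/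
theorem G_not_iso_G_mul {A : Type*} [CommRing A] [IsNoetherianRing A]
    [IsLocalRing A] {x y : A} (hxy : IsExactZeroDivisorPair x y)
    (hreg : Ideal.span ({x} : Set A) ⊓ Ideal.span ({y} : Set A) = ⊥) {a b : A}
    (ha : Function.Injective
      fun m : A ⧸ Ideal.span ({x, y} : Set A) => a • m)
    (hb : ¬ IsUnit b) :
    IsEmpty (Gmod x y a ≃ₗ[A] Gmod x y (a * b)) ∧
    IsEmpty (Hmod x y a ≃ₗ[A] Hmod x y (a * b)) := by
  obtain ⟨hx, hy, -, -⟩ := hxy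
  have hn := aux_not_mem hx hy ha hb
  have mx : x ∈ Ideal.span ({x, y} : Set A) ⊔ Ideal.span {a * b} :=
    Ideal.mem_sup_left (Ideal.subset_span (by simp))
  have my : y ∈ Ideal.span ({x, y} : Set A) ⊔ Ideal.span {a * b} :=
    Ideal.mem_sup_left (Ideal.subset_span (by simp))
  have mab : a * b ∈ Ideal.span ({x, y} : Set A) ⊔ Ideal.span {a * b} :=
    Ideal.mem_sup_right (Ideal.subset_span (by simp))
  refine ⟨⟨fun f => hn ?_⟩, ⟨fun f => hn ?_⟩⟩
  · refine aux_entries (gammaMat x y a) (gammaMat x y (a * b)) _ ?_ f 0 1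
    intro i j
    fin_cases i <;> fin_cases j
    exacts [mx, mab, Ideal.zero_mem _, my]
  · refine neg_mem_iff.mp (aux_entries (etaMat x y a) (etaMat x y (a * b)) _ ?_ f 0 1)
    intro i j
    fin_cases i <;> fin_cases j
    exacts [my, neg_mem_iff.mpr mab, Ideal.zero_mem _, mx]
end
end

section
/- Let A be a commutative noetherian local ring, let x, y ∈ A be a regular exact pair of zero divisors, and let a, b ∈ A be such that a or b is weakly regular on the A-module A/(x, y). Then the A-submodule Q_{η_b,γ_a} = { ψ ∈ M_2(A) | ψη_b = γ_aξ for some ξ ∈ M_2(A) } of the module M_2(A) of 2×2 matrices over A is generated by the five matrices ψ_1 = [[0,1],[0,0]], ψ_2 = [[0,0],[x,b]], ψ_3 = [[0,0],[0,y]], ψ_4 = [[x,0],[0,0]], ψ_5 = [[a,0],[y,0]]. -/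
/-!
Formalization of results from "Construction of totally reflexive modules
from an exact pair of zero divisors" by Henrik Holm.
-/

noncomputable section

open Matrix in
/-- **Lemma (7.3).** Let `x, y` be a regular exact pair of zero divisors and
let `a, b ∈ A` be such that `a` or `b` is weakly regular on `A/(x, y)`. Then
the submodule `Q_{η_b,γ_a} = { ψ ∈ M₂(A) | ψη_b = γ_aξ for some ξ }` of
`M₂(A)` is generated by the five matrices `ψ₁, …, ψ₅`. -/
theorem generators_of_Q_eta_gamma {A : Type*} [CommRing A]
    [IsNoetherianRing A] [IsLocalRing A] {x y : A}
    (hxy : IsExactZeroDivisorPair x y)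
    (hreg : Ideal.span ({x} : Set A) ⊓ Ideal.span ({y} : Set A) = ⊥) {a b : A}
    (hab : (Function.Injective
        fun m : A ⧸ Ideal.span ({x, y} : Set A) => a • m) ∨
      (Function.Injective
        fun m : A ⧸ Ideal.span ({x, y} : Set A) => b • m)) :
    ∀ ψ : Matrix (Fin 2) (Fin 2) A,
      (∃ ξ : Matrix (Fin 2) (Fin 2) A, ψ * etaMat x y b = gammaMat x y a * ξ) ↔
        ψ ∈ Submodule.span A
          ({!![0, 1; 0, 0], !![0, 0; x, b], !![0, 0; 0, y],
            !![x, 0; 0, 0], !![a, 0; y, 0]} :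
              Set (Matrix (Fin 2) (Fin 2) A)) := by
  intro ψ
  obtain ⟨-, -, hx, hy⟩ := hxy
  have hxy0 : x * y = 0 := (hy x).2 (Ideal.mem_span_singleton_self x)
  have key : ∀ z u v : A, z = x * u → z = y * v → z = 0 := by
    intro z u v h1 h2
    have : z ∈ Ideal.span ({x} : Set A) ⊓ Ideal.span ({y} : Set A) :=
      ⟨Ideal.mem_span_singleton.2 ⟨u, h1⟩, Ideal.mem_span_singleton.2 ⟨v, h2⟩⟩
    rw [hreg] at this
    simpa using this
  have inj : ∀ c r : A, (Function.Injective
        fun m : A ⧸ Ideal.span ({x, y} : Set A) => c • m) →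
      c * r ∈ Ideal.span ({x, y} : Set A) → r ∈ Ideal.span ({x, y} : Set A) := by
    intro c r hc hr
    rw [← Ideal.Quotient.eq_zero_iff_mem] at hr ⊢
    apply hc
    simp only [smul_zero]
    rw [← hr, Algebra.smul_def, map_mul]
    rfl
  constructor
  · rintro ⟨ξ, h⟩
    have h00 := congrFun (congrFun h 0) 0
    have h10 := congrFun (congrFun h 1) 0
    have h11 := congrFun (congrFun h 1) 1
    simp [etaMat, gammaMat, Matrix.mul_apply, Fin.sum_univ_two] at h00 h10 h11
    have hg : ξ 1 0 - ψ 1 0 ∈ Ideal.span ({x} : Set A) := by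
      rw [← hy]; linear_combination -h10
    obtain ⟨t, ht⟩ := Ideal.mem_span_singleton.1 hg
    have hr : ψ 1 0 ∈ Ideal.span ({x, y} : Set A) := by
      rcases hab with H | H
      · apply inj a _ H
        rw [Ideal.mem_span_pair]
        exact ⟨-(ξ 0 0) - a * t, ψ 0 0, by linear_combination h00 + a * ht⟩
      · apply inj b _ H
        rw [Ideal.mem_span_pair]
        exact ⟨ψ 1 1, -(ξ 1 1), by linear_combination h11⟩
    obtain ⟨u, v, huv⟩ := Ideal.mem_span_pair.1 hr
    have hp : ψ 0 0 - v * a ∈ Ideal.span ({x} : Set A) := by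
      rw [← hy]
      refine key _ (ξ 0 0 + a * u + a * t) (ψ 0 0 - v * a) ?_ (by ring)
      linear_combination h00 + a * ht - a * huv
    have hs : ψ 1 1 - u * b ∈ Ideal.span ({y} : Set A) := by
      rw [← hx]
      refine key _ (ψ 1 1 - u * b) (ξ 1 1 + v * b) (by ring) ?_
      linear_combination h11 - b * huv
    obtain ⟨p, hp⟩ := Ideal.mem_span_singleton.1 hp
    obtain ⟨s, hs⟩ := Ideal.mem_span_singleton.1 hs
    simp only [Submodule.mem_span_insert, Submodule.mem_span_singleton]
    refine ⟨ψ 0 1, _, ⟨u, _, ⟨s, _, ⟨p, _, ⟨v, rfl⟩, rfl⟩, rfl⟩, rfl⟩, ?_⟩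
    ext i j
    fin_cases i <;> fin_cases j <;> simp
    · linear_combination hp
    · linear_combination -huv
    · linear_combination hs
  · simp only [Submodule.mem_span_insert, Submodule.mem_span_singleton]
    rintro ⟨q, _, ⟨u, _, ⟨s, _, ⟨p, _, ⟨v, rfl⟩, rfl⟩, rfl⟩, rfl⟩, rfl⟩
    refine ⟨!![0, q - p * b; v * y, -(v * b)], ?_⟩
    ext i j
    fin_cases i <;> fin_cases j <;>
      simp [etaMat, gammaMat, Matrix.mul_apply, Fin.sum_univ_two]
    · linear_combination p * hxy0
    · ring
    · linear_combination u * hxy0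
    · linear_combination s * hxy0
end
end
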